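/- For every transversal T of every Kempe coloring of the line graph L(H) of a graph H, there exists a complete minor of L(H) traversed by T, i.e., a set of connected, pairwise disjoint, pairwise adjacent vertex subsets of L(H) each containing exactly one element of T. -/

import Mathlib

/-- The line graph of a simple graph `G`: vertices are the edges of `G`, two
distinct edges are adjacent iff they share an endpoint. -/
def lineGraph {V : Type*} (G : SimpleGraph V) : SimpleGraph G.edgeSet :=
  SimpleGraph.fromRel (fun e f => ∃ v : V, v ∈ (e : Sym2 V) ∧ v ∈ (f : Sym2 V))

/-- `𝔠` is a Kempe coloring of `G`: a partition of the vertex set into independent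
sets such that the union of any two color classes induces a connected subgraph. -/
def KempeColoring {V : Type*} (G : SimpleGraph V) (𝔠 : Set (Set V)) : Prop :=
  (∀ C ∈ 𝔠, C.Nonempty) ∧
  (⋃₀ 𝔠 = Set.univ) ∧
  (∀ C ∈ 𝔠, ∀ D ∈ 𝔠, C ≠ D → Disjoint C D) ∧
  (∀ C ∈ 𝔠, ∀ a ∈ C, ∀ b ∈ C, ¬ G.Adj a b) ∧
  (∀ C ∈ 𝔠, ∀ D ∈ 𝔠, C ≠ D → (G.induce (C ∪ D)).Connected)


namespace KTM

/-- Directed paths with their vertex sets. -/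
inductive Pth {α : Type*} (R : Finset (α × α)) : α → α → Set α → Prop
  | nil (a : α) : Pth R a a {a}
  | cons {a b c : α} {s : Set α} (h : (a, b) ∈ R) (p : Pth R b c s) (ha : a ∉ s) :
      Pth R a c (insert a s)

section menger
variable {α : Type*} {R R' : Finset (α × α)}

theorem Pth.start_mem {a b : α} {s : Set α} (p : Pth R a b s) : a ∈ s := by
  cases p <;> simp

theorem Pth.end_mem {a b : α} {s : Set α} (p : Pth R a b s) : b ∈ s := by
  induction p with
  | nil a => simp
  | cons h p ha ih => exact Set.mem_insert_of_mem _ ih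

theorem Pth.mono {a b : α} {s : Set α} (h : R ⊆ R') (p : Pth R a b s) : Pth R' a b s := by
  induction p with
  | nil a => exact Pth.nil a
  | cons h' p ha ih => exact Pth.cons (h h') ih ha

theorem Pth.split {a c : α} {s : Set α} (p : Pth R a c s) {z : α} (hz : z ∈ s) :
    ∃ s1 s2, Pth R a z s1 ∧ Pth R z c s2 ∧ s1 ∪ s2 = s ∧ s1 ∩ s2 = {z} := by
  induction p with
  | nil a =>
    rw [Set.mem_singleton_iff] at hz
    subst hz
    exact ⟨{z}, {z}, Pth.nil z, Pth.nil z, by simp, by simp⟩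
  | @cons a b c s h p ha ih =>
    by_cases hza : z = a
    · subst hza
      refine ⟨{z}, insert z s, Pth.nil z, Pth.cons h p ha, by simp, by simp⟩
    · have hz' : z ∈ s := by
        rcases hz with hz | hz
        · exact absurd hz hza
        · exact hz
      obtain ⟨s1, s2, p1, p2, hu, hi⟩ := ih hz'
      have ha1 : a ∉ s1 := fun h => ha (hu ▸ Or.inl h)
      have ha2 : a ∉ s2 := fun h => ha (hu ▸ Or.inr h)
      refine ⟨insert a s1, s2, Pth.cons h p1 ha1, p2, ?_, ?_⟩
      · rw [Set.insert_union, hu]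
      · rw [Set.insert_inter_of_notMem ha2, hi]

theorem Pth.concat {a z c : α} {s1 s2 : Set α} (p : Pth R a z s1) (q : Pth R z c s2)
    (h : s1 ∩ s2 = {z}) : Pth R a c (s1 ∪ s2) := by
  induction p with
  | nil a =>
    have : ({a} : Set α) ∪ s2 = s2 := by
      have := q.start_mem
      simpa using this
    rw [this]; exact q
  | @cons a b z s h' p ha ih =>
    have ha2 : a ∉ s2 := by
      intro h2
      have : a ∈ insert a s ∩ s2 := ⟨by simp, h2⟩
      rw [h] at this
      rw [Set.mem_singleton_iff] at this
      subst this
      exact ha p.end_mem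
    rw [Set.insert_inter_of_notMem ha2] at h
    rw [Set.insert_union]
    refine Pth.cons h' (ih q h) ?_
    rintro (h | h)
    · exact ha h
    · exact ha2 h

theorem Pth.concat_subset {a z c : α} {s1 s2 : Set α} (p : Pth R a z s1) (q : Pth R z c s2) :
    ∃ s, s ⊆ s1 ∪ s2 ∧ Pth R a c s := by
  induction p with
  | nil a => exact ⟨s2, by simp, q⟩
  | @cons a b z s h' p ha ih =>
    obtain ⟨s', hs', p'⟩ := ih q
    by_cases h : a ∈ s'
    · obtain ⟨t1, t2, _, p2, hu, _⟩ := p'.split h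
      refine ⟨t2, ?_, p2⟩
      intro x hx
      have : x ∈ s' := hu ▸ Or.inr hx
      rcases hs' this with h | h
      · exact Or.inl (Or.inr h)
      · exact Or.inr h
    · refine ⟨_, ?_, Pth.cons h' p' h⟩
      rw [Set.insert_union]
      exact Set.insert_subset_insert hs'

theorem Pth.first_hit {a c : α} {s : Set α} (p : Pth R a c s) {U : Set α}
    (hU : (s ∩ U).Nonempty) : ∃ u s1, s1 ⊆ s ∧ Pth R a u s1 ∧ s1 ∩ U = {u} := by
  induction p with
  | nil a =>
    obtain ⟨x, hx, hxU⟩ := hU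
    rw [Set.mem_singleton_iff] at hx
    subst hx
    exact ⟨x, {x}, subset_rfl, Pth.nil x, by simpa using hxU⟩
  | @cons a b c s h p ha ih =>
    by_cases haU : a ∈ U
    · exact ⟨a, {a}, by simp, Pth.nil a, by simpa using haU⟩
    · have : (s ∩ U).Nonempty := by rwa [Set.insert_inter_of_notMem haU] at hU
      obtain ⟨u, s1, hs1, p1, h1⟩ := ih this
      refine ⟨u, insert a s1, Set.insert_subset_insert hs1, Pth.cons h p1 fun h => ha (hs1 h), ?_⟩
      rw [Set.insert_inter_of_notMem haU, h1]

theorem Pth.last_hit {a c : α} {s : Set α} (p : Pth R a c s) {U : Set α}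
    (hU : (s ∩ U).Nonempty) : ∃ u s1, s1 ⊆ s ∧ Pth R u c s1 ∧ s1 ∩ U = {u} := by
  induction p with
  | nil a =>
    obtain ⟨x, hx, hxU⟩ := hU
    rw [Set.mem_singleton_iff] at hx
    subst hx
    exact ⟨x, {x}, subset_rfl, Pth.nil x, by simpa using hxU⟩
  | @cons a b c s h p ha ih =>
    by_cases hs : (s ∩ U).Nonempty
    · obtain ⟨u, s1, hs1, p1, h1⟩ := ih hs
      exact ⟨u, s1, hs1.trans (Set.subset_insert _ _), p1, h1⟩
    · have haU : a ∈ U := by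
        by_contra haU
        rw [Set.insert_inter_of_notMem haU] at hU
        exact hs hU
      refine ⟨a, insert a s, subset_rfl, Pth.cons h p ha, ?_⟩
      rw [Set.not_nonempty_iff_eq_empty] at hs
      rw [Set.insert_inter_of_mem haU, hs]
      simp

variable [DecidableEq α]

theorem Pth.erase_of_start {a c x y : α} {s : Set α} (p : Pth R a c s) (h : x ∉ s ∨ c = x) :
    Pth (R.erase (x, y)) a c s := by
  induction p with
  | nil a => exact Pth.nil a
  | @cons a b c s h' p ha ih =>
    refine Pth.cons ?_ (ih ?_) ha
    · rw [Finset.mem_erase]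
      refine ⟨?_, h'⟩
      intro he
      have hax : a = x := congrArg Prod.fst he
      rcases h with h | h
      · exact h (by simp [hax])
      · apply ha; rw [hax, ← h]; exact p.end_mem
    · rcases h with h | h
      · exact Or.inl fun hx => h (Or.inr hx)
      · exact Or.inr h

theorem Pth.erase_of_end {a c x y : α} {s : Set α} (p : Pth R a c s) (h : y ∉ s ∨ a = y) :
    Pth (R.erase (x, y)) a c s := by
  induction p with
  | nil a => exact Pth.nil a
  | @cons a b c s h' p ha ih =>
    have hy : y ∉ s := by
      rcases h with h | h
      · exact fun hx => h (Or.inr hx)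
      · rw [← h]; exact ha
    refine Pth.cons ?_ (ih (Or.inl hy)) ha
    rw [Finset.mem_erase]
    refine ⟨?_, h'⟩
    intro he
    have hby : b = y := congrArg Prod.snd he
    exact hy (hby ▸ p.start_mem)

/-- `S` meets every path from `A` to `B`. -/
def Sep (R : Finset (α × α)) (S A B : Finset α) : Prop :=
  ∀ a ∈ A, ∀ b ∈ B, ∀ s, Pth R a b s → (s ∩ (S : Set α)).Nonempty

theorem menger_aux (n : ℕ) : ∀ (R : Finset (α × α)) (A B : Finset α), R.card = n →
    (∀ S : Finset α, Sep R S A B → B.card ≤ S.card) →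
    ∃ (g : α → α) (F : α → Set α), (∀ b ∈ B, g b ∈ A ∧ Pth R (g b) b (F b)) ∧
      ∀ b ∈ B, ∀ b' ∈ B, b ≠ b' → Disjoint (F b) (F b') := by
  induction n with
  | zero =>
    intro R A B hR h
    rw [Finset.card_eq_zero] at hR
    subst hR
    have hS : Sep ∅ (A ∩ B) A B := by
      intro a ha b hb s p
      cases p with
      | nil => exact ⟨a, by simp, by simp [ha, hb]⟩
      | cons h p ha => simp at h
    have hBA : B ⊆ A := by
      have := Finset.eq_of_subset_of_card_le Finset.inter_subset_right (h _ hS)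
      rw [← this]; exact Finset.inter_subset_left
    refine ⟨id, fun b => {b}, fun b hb => ⟨hBA hb, Pth.nil b⟩, ?_⟩
    intro b _ b' _ hbb
    simpa using hbb
  | succ n ih =>
    intro R A B hR h
    obtain ⟨⟨x, y⟩, hxy⟩ : R.Nonempty := by
      rw [← Finset.card_pos]; omega
    set R' := R.erase (x, y) with hR'
    have hcard : R'.card = n := by rw [hR', Finset.card_erase_of_mem hxy]; omega
    have hsub : R' ⊆ R := Finset.erase_subset _ _
    by_cases hall : ∀ S : Finset α, Sep R' S A B → B.card ≤ S.card
    · obtain ⟨g, F, h1, h2⟩ := ih R' A B hcard hall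
      exact ⟨g, F, fun b hb => ⟨(h1 b hb).1, (h1 b hb).2.mono hsub⟩, h2⟩
    push Not at hall
    obtain ⟨S, hS, hSB⟩ := hall
    have hSx : Sep R (insert x S) A B := by
      intro a ha b hb s p
      by_cases hx : x ∈ s
      · exact ⟨x, hx, by simp⟩
      · obtain ⟨z, hz, hzS⟩ := hS a ha b hb s (p.erase_of_start (Or.inl hx))
        exact ⟨z, hz, by simp at hzS ⊢; exact Or.inr hzS⟩
    have hSy : Sep R (insert y S) A B := by
      intro a ha b hb s p
      by_cases hx : y ∈ s
      · exact ⟨y, hx, by simp⟩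
      · obtain ⟨z, hz, hzS⟩ := hS a ha b hb s (p.erase_of_end (Or.inl hx))
        exact ⟨z, hz, by simp at hzS ⊢; exact Or.inr hzS⟩
    have hcx := h _ hSx
    have hcy := h _ hSy
    have hxS : x ∉ S := by
      intro hx; rw [Finset.insert_eq_of_mem hx] at hcx; omega
    have hyS : y ∉ S := by
      intro hx; rw [Finset.insert_eq_of_mem hx] at hcy; omega
    have hcx' : (insert x S).card = B.card := by
      rw [Finset.card_insert_of_notMem hxS] at hcx ⊢; omega
    have hcy' : (insert y S).card = B.card := by
      rw [Finset.card_insert_of_notMem hyS] at hcy ⊢; omega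
    obtain ⟨f, F, hF, hFd⟩ := ih R' A (insert x S) hcard (by
      intro Q hQ
      rw [hcx']
      apply h
      intro a ha b hb s p
      obtain ⟨u, s1, hs1, p1, hi⟩ := p.first_hit (hSx a ha b hb s p)
      have hu : u ∈ insert x S := by
        have : u ∈ s1 ∩ ((insert x S : Finset α) : Set α) := by rw [hi]; rfl
        exact_mod_cast this.2
      have p2 : Pth R' a u s1 := by
        apply p1.erase_of_start
        by_cases hux : u = x
        · exact Or.inr hux
        · left
          intro hx
          have : x ∈ s1 ∩ ((insert x S : Finset α) : Set α) := ⟨hx, by simp⟩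
          rw [hi] at this
          exact hux this.symm
      obtain ⟨z, hz, hzQ⟩ := hQ a ha u hu s1 p2
      exact ⟨z, hs1 hz, hzQ⟩)
    obtain ⟨g, G, hG, hGd⟩ := ih R' (insert y S) B hcard (by
      intro Q hQ
      apply h
      intro a ha b hb s p
      obtain ⟨u, s1, hs1, p1, hi⟩ := p.last_hit (hSy a ha b hb s p)
      have hu : u ∈ insert y S := by
        have : u ∈ s1 ∩ ((insert y S : Finset α) : Set α) := by rw [hi]; rfl
        exact_mod_cast this.2
      have p2 : Pth R' u b s1 := by
        apply p1.erase_of_end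
        by_cases hux : u = y
        · exact Or.inr hux
        · left
          intro hx
          have : y ∈ s1 ∩ ((insert y S : Finset α) : Set α) := ⟨hx, by simp⟩
          rw [hi] at this
          exact hux this.symm
      obtain ⟨z, hz, hzQ⟩ := hQ u hu b hb s1 p2
      exact ⟨z, hs1 hz, hzQ⟩)
    have ginj : ∀ b ∈ B, ∀ b' ∈ B, g b = g b' → b = b' := by
      intro b hb b' hb' hgg
      by_contra hne
      have h1 := (hG b hb).2.start_mem
      have h2 := (hG b' hb').2.start_mem
      rw [← hgg] at h2
      exact Set.disjoint_left.1 (hGd b hb b' hb' hne) h1 h2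
    have gsurj : ∀ w ∈ insert y S, ∃ b ∈ B, g b = w := by
      intro w hw
      have := Finset.surj_on_of_inj_on_of_card_le (s := B) (t := insert y S) (fun b _ => g b)
        (fun b hb => (hG b hb).1) (fun b b' hb hb' h => ginj b hb b' hb' h) hcy'.le w hw
      obtain ⟨b, hb, h⟩ := this
      exact ⟨b, hb, h.symm⟩
    have hGS : ∀ b ∈ B, ∀ w ∈ insert y S, w ∈ G b → w = g b := by
      intro b hb w hw hwG
      obtain ⟨b', hb', rfl⟩ := gsurj w hw
      by_contra hne
      have hbb : b ≠ b' := fun h => hne (by rw [h])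
      exact Set.disjoint_left.1 (hGd b hb b' hb' hbb) hwG (hG b' hb').2.start_mem
    have hFS : ∀ u ∈ insert x S, ∀ w ∈ insert x S, w ∈ F u → w = u := by
      intro u hu w hw hwF
      by_contra hne
      exact Set.disjoint_left.1 (hFd w hw u hu hne) (hF w hw).2.end_mem hwF
    have key : ∀ u ∈ insert x S, ∀ b ∈ B, ∀ z, z ∈ F u → z ∈ G b → z ∈ S := by
      intro u hu b hb z hzF hzG
      by_contra hzS
      obtain ⟨s1, s2, p1, p2, hun, hin⟩ := (hF u hu).2.split hzF
      obtain ⟨t1, t2, q1, q2, hun', hin'⟩ := (hG b hb).2.split hzG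
      obtain ⟨s, hs, p⟩ := p1.concat_subset q2
      obtain ⟨w, hw, hwS⟩ := hS _ (hF u hu).1 b hb s p
      rw [Finset.mem_coe] at hwS
      rcases hs hw with hw | hw
      · have hwu := hFS u hu w (Finset.mem_insert_of_mem hwS) (hun ▸ Or.inl hw)
        have : w ∈ s1 ∩ s2 := ⟨hw, hwu ▸ p2.end_mem⟩
        rw [hin] at this
        exact hzS (this ▸ hwS)
      · have hwu := hGS b hb w (Finset.mem_insert_of_mem hwS) (hun' ▸ Or.inr hw)
        have : w ∈ t1 ∩ t2 := ⟨hwu ▸ q1.start_mem, hw⟩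
        rw [hin'] at this
        exact hzS (this ▸ hwS)
    let σ : α → α := fun b => if g b ∈ S then g b else x
    have hσ : ∀ b, σ b ∈ insert x S := by
      intro b
      by_cases hb : g b ∈ S <;> simp [σ, hb]
    have hgy : ∀ b ∈ B, g b ∉ S → g b = y := by
      intro b hb hn
      have := (hG b hb).1
      rw [Finset.mem_insert] at this
      tauto
    have σinj : ∀ b ∈ B, ∀ b' ∈ B, σ b = σ b' → b = b' := by
      intro b hb b' hb' hs
      apply ginj b hb b' hb'
      by_cases h1 : g b ∈ S <;> by_cases h2 : g b' ∈ S
      · simpa [σ, h1, h2] using hs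
      · simp [σ, h1, h2] at hs; rw [hs] at h1; exact absurd h1 hxS
      · simp [σ, h1, h2] at hs; rw [← hs] at h2; exact absurd h2 hxS
      · rw [hgy b hb h1, hgy b' hb' h2]
    refine ⟨fun b => f (σ b), fun b => F (σ b) ∪ G b, ?_, ?_⟩
    · intro b hb
      refine ⟨(hF _ (hσ b)).1, ?_⟩
      have pF := (hF _ (hσ b)).2.mono hsub
      have pG := (hG b hb).2.mono hsub
      by_cases h1 : g b ∈ S
      · have e : σ b = g b := by simp [σ, h1]
        have e' : F (σ b) ∩ G b = {g b} := by
          ext z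
          constructor
          · rintro ⟨hz1, hz2⟩
            have := key _ (hσ b) b hb z hz1 hz2
            exact hGS b hb z (Finset.mem_insert_of_mem this) hz2
          · rintro rfl
            exact ⟨e ▸ (hF _ (hσ b)).2.end_mem, (hG b hb).2.start_mem⟩
        rw [← e] at pG e'
        exact pF.concat pG e'
      · have e : σ b = x := by simp [σ, h1]
        have ey := hgy b hb h1
        have hd : ∀ z, z ∈ F (σ b) → z ∉ G b := by
          intro z hz1 hz2
          have hzS := key _ (hσ b) b hb z hz1 hz2
          have := hGS b hb z (Finset.mem_insert_of_mem hzS) hz2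
          exact h1 (this ▸ hzS)
        have hx1 : x ∈ F (σ b) := e ▸ (hF _ (hσ b)).2.end_mem
        rw [ey] at pG
        have pG' : Pth R x b (insert x (G b)) := Pth.cons hxy pG (hd x hx1)
        rw [e] at pF
        have := pF.concat pG' (by
          ext z
          constructor
          · rintro ⟨hz1, hz2 | hz2⟩
            · exact hz2
            · exact absurd hz2 (hd z (e ▸ hz1))
          · rintro rfl
            exact ⟨e ▸ hx1, by simp⟩)
        rw [Set.union_insert, Set.insert_eq_of_mem (Set.mem_union_left _ (e ▸ hx1))] at this
        simp only [e]
        exact this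
    · intro b hb b' hb' hne
      have aux : ∀ b ∈ B, ∀ b' ∈ B, b ≠ b' → ∀ z, z ∈ F (σ b) → z ∉ G b' := by
        intro b hb b' hb' hne z hz1 hz2
        have hzS := key _ (hσ b) b' hb' z hz1 hz2
        have e1 := hGS b' hb' z (Finset.mem_insert_of_mem hzS) hz2
        have e2 := hFS _ (hσ b) z (Finset.mem_insert_of_mem hzS) hz1
        have : g b ∈ S := by
          by_contra hn
          have : σ b = x := by simp [σ, hn]
          rw [this] at e2
          exact hxS (e2 ▸ hzS)
        have e3 : σ b = g b := by simp [σ, this]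
        exact hne (ginj b hb b' hb' (by rw [← e1, ← e3, ← e2]))
      rw [Set.disjoint_left]
      rintro z (hz | hz) (hz' | hz')
      · exact Set.disjoint_left.1 (hFd _ (hσ b) _ (hσ b')
          (fun h => hne (σinj b hb b' hb' h))) hz hz'
      · exact aux b hb b' hb' hne z hz hz'
      · exact aux b' hb' b hb hne.symm z hz' hz
      · exact Set.disjoint_left.1 (hGd b hb b' hb' hne) hz hz'

theorem menger (R : Finset (α × α)) (A B : Finset α)
    (h : ∀ S : Finset α, Sep R S A B → B.card ≤ S.card) :
    ∃ (g : α → α) (F : α → Set α), (∀ b ∈ B, g b ∈ A ∧ Pth R (g b) b (F b)) ∧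
      ∀ b ∈ B, ∀ b' ∈ B, b ≠ b' → Disjoint (F b) (F b') :=
  menger_aux _ R A B rfl h

end menger

end KTM

namespace KTM
section defs
variable {V E : Type*}

/-- `v` is an end of the edge `e`. -/
def Inc (s t : E → V) (v : V) (e : E) : Prop := v = s e ∨ v = t e

/-- Two edges share an end. -/
def Shr (s t : E → V) (e f : E) : Prop := ∃ v, Inc s t v e ∧ Inc s t v f

/-- Connectivity of a set with respect to a relation, expressed by closed predicates. -/
def Cn (r : E → E → Prop) (F : Set E) : Prop :=
  ∀ P : E → Prop, (∃ e ∈ F, P e) → (∀ e ∈ F, ∀ f ∈ F, P e → r e f → P f) → ∀ f ∈ F, P f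

theorem Shr.symm {s t : E → V} {e f : E} (h : Shr s t e f) : Shr s t f e := by
  obtain ⟨v, h1, h2⟩ := h
  exact ⟨v, h2, h1⟩

theorem Inc.two {s t : E → V} {u w x : V} {e : E} (hu : Inc s t u e) (hw : Inc s t w e)
    (hne : u ≠ w) (hx : Inc s t x e) : x = u ∨ x = w := by
  unfold Inc at *
  grind

theorem Cn.singleton (r : E → E → Prop) (e : E) : Cn r {e} := by
  intro P ⟨e', he', hP⟩ _ f hf
  rw [Set.mem_singleton_iff] at he' hf
  rw [hf, ← he']; exact hP

theorem Cn.star {s t : E → V} {F : Set E} (v : V) (h : ∀ e ∈ F, Inc s t v e) :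
    Cn (Shr s t) F := by
  intro P ⟨e', he', hP⟩ hc f hf
  exact hc e' he' f hf hP ⟨v, h _ he', h _ hf⟩

theorem Cn.insert {s t : E → V} {F : Set E} (hF : Cn (Shr s t) F) {a e : E} (ha : a ∈ F)
    (h : Shr s t e a) : Cn (Shr s t) (insert e F) := by
  intro P ⟨e', he', hP⟩ hc
  have hPa : P a := by
    rcases he' with rfl | he'
    · exact hc _ (by simp) a (by simp [ha]) hP h
    · exact hF P ⟨e', he', hP⟩ (fun x hx y hy => hc x (by simp [hx]) y (by simp [hy])) a ha
  have hall := hF P ⟨a, ha, hPa⟩ (fun x hx y hy => hc x (by simp [hx]) y (by simp [hy]))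
  rintro f (rfl | hf)
  · exact hc a (by simp [ha]) _ (by simp) hPa h.symm
  · exact hall f hf

/-- A clique minor inside the vertex set `C`, rooted at the edges in `T`. -/
def Ok (s t : E → V) (T : Finset E) (C : Finset V) (B : E → Set E) : Prop :=
  (∀ e ∈ T, e ∈ B e) ∧ (∀ e ∈ T, Cn (Shr s t) (B e)) ∧
  (∀ e ∈ T, ∀ f ∈ B e, s f ∈ C ∧ t f ∈ C) ∧
  (∀ e ∈ T, ∀ f ∈ T, e ≠ f → Disjoint (B e) (B f)) ∧
  (∀ e ∈ T, ∀ f ∈ T, e ≠ f → ∃ a ∈ B e, ∃ b ∈ B f, Shr s t a b)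

theorem inside_of_inc {s t : E → V} {C : Finset V} {u w : V} {e : E} (hu : u ∈ C) (hw : w ∈ C)
    (hne : u ≠ w) (h1 : Inc s t u e) (h2 : Inc s t w e) : s e ∈ C ∧ t e ∈ C := by
  unfold Inc at *
  grind

theorem other_end {s t : E → V} (hl : ∀ e, s e ≠ t e) (e : E) (a : V) :
    ∃ w, w ≠ a ∧ Inc s t w e := by
  by_cases h : s e = a
  · exact ⟨t e, fun h' => hl e (h.trans h'.symm), Or.inr rfl⟩
  · exact ⟨s e, h, Or.inl rfl⟩

theorem share_of_card_le {s t : E → V} (hl : ∀ e, s e ≠ t e) {C : Finset V} (hC : C.card ≤ 3)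
    {e f : E} (he : s e ∈ C ∧ t e ∈ C) (hf : s f ∈ C ∧ t f ∈ C) : Shr s t e f := by
  classical
  by_contra hn
  have h : ∀ v, ¬ (Inc s t v e ∧ Inc s t v f) := fun v hv => hn ⟨v, hv⟩
  unfold Inc at h
  have hsub : ({s e, t e, s f, t f} : Finset V) ⊆ C := by
    intro x hx
    simp only [Finset.mem_insert, Finset.mem_singleton] at hx
    grind
  have := Finset.card_le_card hsub
  have h4 : ({s e, t e, s f, t f} : Finset V).card = 4 := by
    have := hl e
    have := hl f
    have := h (s e)
    have := h (t e)
    rw [Finset.card_insert_of_notMem, Finset.card_insert_of_notMem, Finset.card_insert_of_notMem,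
      Finset.card_singleton] <;> simp <;> grind
  omega

end defs

end KTM

namespace KTM
section complete
variable {V E : Type*}

open Classical in
/-- Degree of a vertex with respect to an edge set. -/
noncomputable def dg (s t : E → V) (T : Finset E) (w : V) : ℕ := (T.filter (fun e => Inc s t w e)).card

theorem sum_dg {s t : E → V} (hl : ∀ e, s e ≠ t e) {C : Finset V} {T : Finset E}
    (hT : ∀ e ∈ T, s e ∈ C ∧ t e ∈ C) : ∑ w ∈ C, dg s t T w = 2 * T.card := by
  classical
  have := Finset.sum_card_bipartiteAbove_eq_sum_card_bipartiteBelow (s := C) (t := T)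
    (fun w e => Inc s t w e)
  unfold Finset.bipartiteAbove Finset.bipartiteBelow at this
  have h2 : ∀ e ∈ T, (C.filter (fun w => Inc s t w e)).card = 2 := by
    intro e he
    have : C.filter (fun w => Inc s t w e) = {s e, t e} := by
      ext w
      have := hT e he
      simp only [Finset.mem_filter, Inc, Finset.mem_insert, Finset.mem_singleton]
      grind
    rw [this, Finset.card_pair (hl e)]
  rw [Finset.sum_congr rfl h2, Finset.sum_const, smul_eq_mul, mul_comm] at this
  rw [← this]
  unfold dg
  refine Finset.sum_congr rfl fun w _ => ?_
  congr

theorem dg_eq_zero {s t : E → V} {T : Finset E} {w : V} :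
    dg s t T w = 0 ↔ ∀ e ∈ T, ¬ Inc s t w e := by
  classical
  unfold dg
  rw [Finset.card_eq_zero, Finset.filter_eq_empty_iff]

theorem complete_step1 {s t : E → V} (hl : ∀ e, s e ≠ t e) {C : Finset V} [DecidableEq V]
    [DecidableEq E]
    (ed : V → V → E) (hed : ∀ u ∈ C, ∀ w ∈ C, u ≠ w → Inc s t u (ed u w) ∧ Inc s t w (ed u w))
    {T : Finset E} (hT : ∀ e ∈ T, s e ∈ C ∧ t e ∈ C) {z : V} (hz : z ∈ C) {t0 : E} (ht0 : t0 ∈ T)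
    (h0 : Inc s t z t0) (h1 : ∀ e ∈ T, Inc s t z e → e = t0) {B : E → Set E}
    (hB : Ok s t (T.erase t0) (C.erase z) B) : ∃ B, Ok s t T C B := by
  obtain ⟨b1, b2, b3, b4, b5⟩ := hB
  have hins : ∀ f, (s f ∈ C.erase z ∧ t f ∈ C.erase z) → (s f ∈ C ∧ t f ∈ C) ∧ ¬ Inc s t z f := by
    intro f hf
    simp only [Finset.mem_erase] at hf
    unfold Inc
    grind
  let St : Set E := {f | Inc s t z f ∧ s f ∈ C ∧ t f ∈ C}
  have touch : ∀ e ∈ T, e ≠ t0 → ∃ a ∈ B e, ∃ b ∈ St, Shr s t a b := by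
    intro e he hne
    have hs : s e ≠ z := fun h => hne (h1 e he (Or.inl h.symm))
    have := hed z hz (s e) (hT e he).1 hs.symm
    refine ⟨e, b1 e (by simp [he, hne]), ed z (s e), ⟨this.1, ?_⟩, s e, Or.inl rfl, this.2⟩
    exact inside_of_inc hz (hT e he).1 hs.symm this.1 this.2
  have disj : ∀ e ∈ T, e ≠ t0 → Disjoint (B e) St := by
    intro e he hne
    rw [Set.disjoint_left]
    intro f hf hf'
    exact (hins f (b3 e (by simp [he, hne]) f hf)).2 hf'.1
  refine ⟨fun e => if e = t0 then St else B e, ?_, ?_, ?_, ?_, ?_⟩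
  · intro e he
    by_cases h : e = t0
    · subst h; simp only [if_true]; exact ⟨h0, hT e he⟩
    · simp only [if_neg h]; exact b1 e (by simp [he, h])
  · intro e he
    by_cases h : e = t0
    · subst h; simp only [if_true]; exact Cn.star z fun e he => he.1
    · simp only [if_neg h]; exact b2 e (by simp [he, h])
  · intro e he f hf
    by_cases h : e = t0
    · subst h; simp only [if_true] at hf; exact hf.2
    · simp only [if_neg h] at hf; exact (hins f (b3 e (by simp [he, h]) f hf)).1
  · intro e he f hf hne
    by_cases h : e = t0 <;> by_cases h' : f = t0
    · exact absurd (h.trans h'.symm) hne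
    · simp only [if_pos h, if_neg h']; exact (disj f hf h').symm
    · simp only [if_pos h', if_neg h]; exact (disj e he h)
    · simp only [if_neg h, if_neg h']; exact b4 e (by simp [he, h]) f (by simp [hf, h']) hne
  · intro e he f hf hne
    by_cases h : e = t0 <;> by_cases h' : f = t0
    · exact absurd (h.trans h'.symm) hne
    · simp only [if_pos h, if_neg h']
      obtain ⟨a, ha, b, hb, hab⟩ := touch f hf h'
      exact ⟨b, hb, a, ha, hab.symm⟩
    · simp only [if_pos h', if_neg h]; exact touch e he h
    · simp only [if_neg h, if_neg h']; exact b5 e (by simp [he, h]) f (by simp [hf, h']) hne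

theorem complete_step2 {s t : E → V} (hl : ∀ e, s e ≠ t e) {C : Finset V} [DecidableEq V]
    [DecidableEq E]
    (ed : V → V → E) (hed : ∀ u ∈ C, ∀ w ∈ C, u ≠ w → Inc s t u (ed u w) ∧ Inc s t w (ed u w))
    {T : Finset E} (hT : ∀ e ∈ T, s e ∈ C ∧ t e ∈ C) {z : V} (hz : z ∈ C) {t1 t2 : E}
    (ht1 : t1 ∈ T) (ht2 : t2 ∈ T) (h12 : t1 ≠ t2)
    (hz1 : Inc s t z t1) (hz2 : Inc s t z t2) (h1 : ∀ e ∈ T, Inc s t z e → e = t1 ∨ e = t2)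
    {a : V} (ha : Inc s t a t1) (haz : a ≠ z) {n : E} (hn : n ∉ T) (han : Inc s t a n)
    {B : E → Set E}
    (hB : Ok s t (insert n ((T.erase t1).erase t2)) (C.erase z) B) : ∃ B, Ok s t T C B := by
  obtain ⟨b1, b2, b3, b4, b5⟩ := hB
  have hins : ∀ f, (s f ∈ C.erase z ∧ t f ∈ C.erase z) → (s f ∈ C ∧ t f ∈ C) ∧ ¬ Inc s t z f := by
    intro f hf
    simp only [Finset.mem_erase] at hf
    unfold Inc
    grind
  have hnm : n ∈ insert n ((T.erase t1).erase t2) := by simp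
  have hmem : ∀ e ∈ T, e ≠ t1 → e ≠ t2 → e ∈ insert n ((T.erase t1).erase t2) := by
    intro e he h h'; simp [he, h, h']
  have hnn : ∀ e ∈ T, e ≠ n := fun e he h => hn (h ▸ he)
  let St : Set E := {f | Inc s t z f ∧ (s f ∈ C ∧ t f ∈ C) ∧ f ≠ t1}
  have touch : ∀ e ∈ T, e ≠ t1 → e ≠ t2 → ∃ a ∈ B e, ∃ b ∈ St, Shr s t a b := by
    intro e he hne hne'
    obtain ⟨w, hwa, hw⟩ := other_end hl e a
    have hwz : w ≠ z := by
      rintro rfl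
      rcases h1 e he hw with h | h
      · exact hne h
      · exact hne' h
    have hwC : w ∈ C := by
      rcases hw with rfl | rfl
      · exact (hT e he).1
      · exact (hT e he).2
    have := hed z hz w hwC hwz.symm
    refine ⟨e, b1 e (hmem e he hne hne'), ed z w, ⟨this.1, ?_, ?_⟩, w, hw, this.2⟩
    · exact inside_of_inc hz hwC hwz.symm this.1 this.2
    · intro h
      rw [h] at this
      rcases Inc.two hz1 ha haz.symm this.2 with h | h
      · exact hwz h
      · exact hwa h
  have disj : ∀ e ∈ insert n ((T.erase t1).erase t2), ∀ f ∈ B e, ¬ Inc s t z f := by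
    intro e he f hf hf'
    exact (hins f (b3 e he f hf)).2 hf'
  let B' : E → Set E := fun e => if e = t1 then insert t1 (B n) else if e = t2 then St else B e
  have e1 : B' t1 = insert t1 (B n) := by simp [B']
  have e2 : B' t2 = St := by simp [B', h12.symm]
  have e3 : ∀ e, e ≠ t1 → e ≠ t2 → B' e = B e := by intro e h h'; simp [B', h, h']
  have cases3 : ∀ e ∈ T, e = t1 ∨ e = t2 ∨ (e ≠ t1 ∧ e ≠ t2) := by intro e _; tauto
  have d12 : Disjoint (B' t1) (B' t2) := by
    rw [e1, e2, Set.disjoint_left]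
    rintro f (rfl | hf) hf'
    · exact hf'.2.2 rfl
    · exact disj n hnm f hf hf'.1
  have d1e : ∀ e ∈ T, e ≠ t1 → e ≠ t2 → Disjoint (B' t1) (B' e) := by
    intro e he h h'
    rw [e1, e3 e h h', Set.disjoint_left]
    rintro f (rfl | hf) hf'
    · exact disj e (hmem e he h h') f hf' hz1
    · exact Set.disjoint_left.1 (b4 n hnm e (hmem e he h h') (hnn e he).symm) hf hf'
  have d2e : ∀ e ∈ T, e ≠ t1 → e ≠ t2 → Disjoint (B' t2) (B' e) := by
    intro e he h h'
    rw [e2, e3 e h h', Set.disjoint_left]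
    intro f hf hf'
    exact disj e (hmem e he h h') f hf' hf.1
  have s2 : t2 ∈ St := ⟨hz2, hT t2 ht2, h12.symm⟩
  have t12 : ∃ a ∈ B' t1, ∃ b ∈ B' t2, Shr s t a b := by
    rw [e1, e2]
    exact ⟨t1, by simp, t2, s2, z, hz1, hz2⟩
  have t1e : ∀ e ∈ T, e ≠ t1 → e ≠ t2 → ∃ a ∈ B' t1, ∃ b ∈ B' e, Shr s t a b := by
    intro e he h h'
    rw [e1, e3 e h h']
    obtain ⟨x, hx, y, hy, hxy⟩ := b5 n hnm e (hmem e he h h') (hnn e he).symm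
    exact ⟨x, Or.inr hx, y, hy, hxy⟩
  have t2e : ∀ e ∈ T, e ≠ t1 → e ≠ t2 → ∃ a ∈ B' t2, ∃ b ∈ B' e, Shr s t a b := by
    intro e he h h'
    rw [e2, e3 e h h']
    obtain ⟨x, hx, y, hy, hxy⟩ := touch e he h h'
    exact ⟨y, hy, x, hx, hxy.symm⟩
  have sw : ∀ e f, (∃ a ∈ B' e, ∃ b ∈ B' f, Shr s t a b) → ∃ a ∈ B' f, ∃ b ∈ B' e, Shr s t a b := by
    rintro e f ⟨x, hx, y, hy, hxy⟩
    exact ⟨y, hy, x, hx, hxy.symm⟩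
  refine ⟨B', ?_, ?_, ?_, ?_, ?_⟩
  · intro e he
    rcases cases3 e he with rfl | rfl | ⟨h, h'⟩
    · rw [e1]; simp
    · rw [e2]; exact s2
    · rw [e3 e h h']; exact b1 e (hmem e he h h')
  · intro e he
    rcases cases3 e he with rfl | rfl | ⟨h, h'⟩
    · rw [e1]
      exact (b2 n hnm).insert (b1 n hnm) ⟨a, ha, han⟩
    · rw [e2]; exact Cn.star z fun e he => he.1
    · rw [e3 e h h']; exact b2 e (hmem e he h h')
  · intro e he f hf
    rcases cases3 e he with rfl | rfl | ⟨h, h'⟩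
    · rw [e1] at hf
      rcases hf with rfl | hf
      · exact hT _ he
      · exact (hins f (b3 n hnm f hf)).1
    · rw [e2] at hf; exact hf.2.1
    · rw [e3 e h h'] at hf; exact (hins f (b3 e (hmem e he h h') f hf)).1
  · intro e he f hf hne
    rcases cases3 e he with rfl | rfl | ⟨h, h'⟩ <;> rcases cases3 f hf with rfl | rfl | ⟨g, g'⟩
    · exact absurd rfl hne
    · exact d12
    · exact d1e f hf g g'
    · exact d12.symm
    · exact absurd rfl hne
    · exact d2e f hf g g'
    · exact (d1e e he h h').symm
    · exact (d2e e he h h').symm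
    · rw [e3 e h h', e3 f g g']; exact b4 e (hmem e he h h') f (hmem f hf g g') hne
  · intro e he f hf hne
    rcases cases3 e he with rfl | rfl | ⟨h, h'⟩ <;> rcases cases3 f hf with rfl | rfl | ⟨g, g'⟩
    · exact absurd rfl hne
    · exact t12
    · exact t1e f hf g g'
    · exact sw _ _ t12
    · exact absurd rfl hne
    · exact t2e f hf g g'
    · exact sw _ _ (t1e e he h h')
    · exact sw _ _ (t2e e he h h')
    · rw [e3 e h h', e3 f g g']; exact b5 e (hmem e he h h') f (hmem f hf g g') hne

/-- The theorem of Hall applied to vertices and edges. -/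
theorem hall_edges {s t : E → V} {C : Finset V} {T : Finset E} [DecidableEq V] [DecidableEq E]
    (hne : C.Nonempty) (hcard : C.card ≤ T.card)
    (hdg : ∀ w ∈ C, dg s t T w = 0 ∨ 2 ≤ dg s t T w) :
    ∃ h : V → E, (∀ u ∈ C, ∀ u' ∈ C, h u = h u' → u = u') ∧
      ∀ u ∈ C, h u ∈ T ∧ (dg s t T u ≠ 0 → Inc s t u (h u)) := by
  classical
  let tt : {u // u ∈ C} → Finset E := fun u =>
    if dg s t T u = 0 then T else T.filter (fun e => Inc s t u e)
  have hall : ∀ W : Finset {u // u ∈ C}, W.card ≤ (W.biUnion tt).card := by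
    intro W
    by_cases h0 : ∃ u ∈ W, dg s t T u = 0
    · obtain ⟨u, hu, h⟩ := h0
      have h1 : T ⊆ W.biUnion tt := by
        intro e he
        rw [Finset.mem_biUnion]
        exact ⟨u, hu, by simp [tt, h, he]⟩
      have h2 : W.card ≤ C.card := by
        have := Finset.card_le_univ W
        simpa using this
      exact h2.trans (hcard.trans (Finset.card_le_card h1))
    · push Not at h0
      have hd := Finset.sum_card_bipartiteAbove_eq_sum_card_bipartiteBelow (s := W)
        (t := W.biUnion tt) (fun w e => Inc s t w.1 e)
      unfold Finset.bipartiteAbove Finset.bipartiteBelow at hd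
      have hl : ∀ u ∈ W, 2 ≤ ((W.biUnion tt).filter (fun e => Inc s t u.1 e)).card := by
        intro u hu
        have h2 : 2 ≤ dg s t T u := (hdg u u.2).resolve_left (h0 u hu)
        refine h2.trans (Finset.card_le_card ?_)
        intro e he
        rw [Finset.mem_filter] at he ⊢
        refine ⟨?_, he.2⟩
        rw [Finset.mem_biUnion]
        exact ⟨u, hu, by simp [tt, h0 u hu, he.1, he.2]⟩
      have hr : ∀ e ∈ W.biUnion tt, (W.filter (fun w => Inc s t w.1 e)).card ≤ 2 := by
        intro e _
        have : (W.filter (fun w => Inc s t w.1 e)).image Subtype.val ⊆ {s e, t e} := by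
          intro w hw
          rw [Finset.mem_image] at hw
          obtain ⟨w', hw', rfl⟩ := hw
          rw [Finset.mem_filter] at hw'
          simpa [Inc] using hw'.2
        have h1 := Finset.card_le_card this
        rw [Finset.card_image_of_injective _ Subtype.val_injective] at h1
        exact h1.trans Finset.card_le_two
      have h1 := Finset.card_nsmul_le_sum _ _ _ hl
      have h2 := Finset.sum_le_card_nsmul _ _ _ hr
      have h3 := h1.trans (hd.le.trans h2)
      simp only [smul_eq_mul] at h3
      omega
  obtain ⟨f, hf, hft⟩ := (Finset.all_card_le_biUnion_card_iff_exists_injective tt).1 hall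
  obtain ⟨c, hc⟩ := hne
  refine ⟨fun u => if hu : u ∈ C then f ⟨u, hu⟩ else f ⟨c, hc⟩, ?_, ?_⟩
  · intro u hu u' hu' h
    simp only [dif_pos hu, dif_pos hu'] at h
    exact congrArg Subtype.val (hf h)
  · intro u hu
    have := hft ⟨u, hu⟩
    simp only [dif_pos hu]
    by_cases h : dg s t T u = 0
    · simp only [tt, h, if_true] at this
      exact ⟨this, fun h' => absurd h h'⟩
    · simp only [tt, h, if_false, Finset.mem_filter] at this
      exact ⟨this.1, fun _ => this.2⟩

end complete

end KTM

namespace KTM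
section complete2
variable {V E : Type*}

theorem complete_step3 {s t : E → V} (hl : ∀ e, s e ≠ t e) {C : Finset V} [DecidableEq V]
    [DecidableEq E]
    (ed : V → V → E) (hed : ∀ u ∈ C, ∀ w ∈ C, u ≠ w → Inc s t u (ed u w) ∧ Inc s t w (ed u w))
    {T : Finset E} (hT : ∀ e ∈ T, s e ∈ C ∧ t e ∈ C) (hcard : C.card = T.card)
    (hdg : ∀ w ∈ C, dg s t T w = 0 ∨ 2 ≤ dg s t T w) {z u0 : V} (hz : z ∈ C) (hu0 : u0 ∈ C)
    (hzu : u0 ≠ z) (dz : dg s t T z = 0) (du0 : dg s t T u0 = 0) : ∃ B, Ok s t T C B := by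
  have hcz : (C.erase z).card + 1 = T.card := by
    rw [Finset.card_erase_of_mem hz, ← hcard]
    have := Finset.card_pos.2 ⟨z, hz⟩
    omega
  have hmz : ∀ u, u ∈ C.erase z → u ∈ C ∧ u ≠ z := by
    intro u hu; rw [Finset.mem_erase] at hu; exact ⟨hu.2, hu.1⟩
  obtain ⟨h, hinj, hh⟩ := hall_edges (s := s) (t := t) (C := C.erase z) (T := T)
    ⟨u0, by simp [hzu, hu0]⟩ (by omega) (fun w hw => hdg w (hmz w hw).1)
  have himc : ((C.erase z).image h).card = (C.erase z).card :=
    Finset.card_image_of_injOn (fun u hu u' hu' e => hinj u hu u' hu' e)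
  have himT : (C.erase z).image h ⊆ T := by
    intro e he
    rw [Finset.mem_image] at he
    obtain ⟨u, hu, rfl⟩ := he
    exact (hh u hu).1
  obtain ⟨t0, ht0, ht0n⟩ : ∃ t0 ∈ T, t0 ∉ (C.erase z).image h := by
    by_contra hcon
    push Not at hcon
    have := Finset.card_le_card (show T ⊆ (C.erase z).image h from hcon)
    omega
  have himE : (C.erase z).image h = T.erase t0 := by
    apply Finset.eq_of_subset_of_card_le
    · intro e he
      rw [Finset.mem_erase]
      exact ⟨fun h => ht0n (h ▸ he), himT he⟩
    · rw [Finset.card_erase_of_mem ht0]; omega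
  have hex : ∀ e, ∃ u, e ∈ T → e ≠ t0 → u ∈ C ∧ u ≠ z ∧ h u = e := by
    intro e
    by_cases he : e ∈ T ∧ e ≠ t0
    · have : e ∈ (C.erase z).image h := by rw [himE]; simp [he]
      rw [Finset.mem_image] at this
      obtain ⟨u, hu, hue⟩ := this
      exact ⟨u, fun _ _ => ⟨(hmz u hu).1, (hmz u hu).2, hue⟩⟩
    · exact ⟨z, fun h1 h2 => absurd ⟨h1, h2⟩ he⟩
  choose φ hφ using hex
  have φinj : ∀ e ∈ T, e ≠ t0 → ∀ f ∈ T, f ≠ t0 → e ≠ f → φ e ≠ φ f := by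
    intro e he h1 f hf h2 hne hc
    apply hne
    rw [← (hφ e he h1).2.2, ← (hφ f hf h2).2.2, hc]
  have φinc : ∀ e ∈ T, e ≠ t0 → dg s t T (φ e) ≠ 0 → Inc s t (φ e) e := by
    intro e he h1 h2
    have h3 := hφ e he h1
    have := (hh (φ e) (by simp [h3.1, h3.2.1])).2 h2
    rwa [h3.2.2] at this
  have iso : ∀ w, dg s t T w = 0 → ∀ e ∈ T, ¬ Inc s t w e := fun w hw => dg_eq_zero.1 hw
  have sdg : ∀ e ∈ T, dg s t T (s e) ≠ 0 := fun e he hc => iso _ hc e he (Or.inl rfl)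
  let q : V := s (h u0)
  let L : E → Set E := fun e =>
    if dg s t T (φ e) = 0 then {e, ed (s e) (φ e), ed (φ e) z} else {e, ed (φ e) z}
  let S0 : Set E := {f | ∃ w, w ∈ C ∧ dg s t T w ≠ 0 ∧ w ≠ q ∧ f = ed u0 w}
  have edz : ∀ e ∈ T, e ≠ t0 → Inc s t (φ e) (ed (φ e) z) ∧ Inc s t z (ed (φ e) z) := by
    intro e he h1
    have h3 := hφ e he h1
    exact hed _ h3.1 z hz h3.2.1
  have lnk : ∀ e ∈ T, e ≠ t0 → dg s t T (φ e) = 0 → s e ≠ φ e ∧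
      Inc s t (s e) (ed (s e) (φ e)) ∧ Inc s t (φ e) (ed (s e) (φ e)) := by
    intro e he h1 h2
    have h3 := hφ e he h1
    have hne : s e ≠ φ e := fun hc => sdg e he (hc ▸ h2)
    exact ⟨hne, hed _ (hT e he).1 _ h3.1 hne⟩
  have Lmem : ∀ e, e ∈ L e := by
    intro e; by_cases h0 : dg s t T (φ e) = 0 <;> simp [L, h0]
  have Lz : ∀ e, ed (φ e) z ∈ L e := by
    intro e; by_cases h0 : dg s t T (φ e) = 0 <;> simp [L, h0]
  have Lcases : ∀ e f, f ∈ L e → f = e ∨ f = ed (φ e) z ∨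
      (dg s t T (φ e) = 0 ∧ f = ed (s e) (φ e)) := by
    intro e f hf
    by_cases h0 : dg s t T (φ e) = 0
    · simp only [L, h0, if_true, Set.mem_insert_iff, Set.mem_singleton_iff] at hf
      tauto
    · simp only [L, h0, if_false, Set.mem_insert_iff, Set.mem_singleton_iff] at hf
      tauto
  -- the three kinds of edges are different
  have zlink : ∀ e ∈ T, e ≠ t0 → dg s t T (φ e) = 0 → ¬ Inc s t z (ed (s e) (φ e)) := by
    intro e he h1 h2 hc
    obtain ⟨h3, h4, h5⟩ := lnk e he h1 h2
    rcases Inc.two h4 h5 h3 hc with h | h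
    · exact sdg e he (h ▸ dz)
    · exact (hφ e he h1).2.1 h.symm
  have s0inc : ∀ w, w ∈ C → dg s t T w ≠ 0 → w ≠ u0 ∧ Inc s t u0 (ed u0 w) ∧ Inc s t w (ed u0 w) := by
    intro w hw hd
    have hne : w ≠ u0 := fun hc => hd (hc ▸ du0)
    exact ⟨hne, hed u0 hu0 w hw hne.symm⟩
  have ends0 : ∀ e ∈ T, ∃ w, w ∈ C ∧ dg s t T w ≠ 0 ∧ w ≠ q ∧ Inc s t w e := by
    intro e he
    obtain ⟨w, hw, hwe⟩ := other_end hl e q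
    refine ⟨w, ?_, fun hc => iso w hc e he hwe, hw, hwe⟩
    rcases hwe with rfl | rfl
    · exact (hT e he).1
    · exact (hT e he).2
  have touch0 : ∀ e ∈ T, ∃ f ∈ S0, Shr s t e f := by
    intro e he
    obtain ⟨w, h1, h2, h3, h4⟩ := ends0 e he
    exact ⟨ed u0 w, ⟨w, h1, h2, h3, rfl⟩, w, h4, (s0inc w h1 h2).2.2⟩
  have disj0 : ∀ e ∈ T, e ≠ t0 → ∀ f, f ∈ L e → f ∉ insert t0 S0 := by
    intro e he h1 f hf hf0
    have h3 := hφ e he h1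
    rcases hf0 with rfl | ⟨w, hw, hdw, hwq, rfl⟩
    · rcases Lcases e _ hf with h | h | ⟨h0, h⟩
      · exact h1 h.symm
      · exact iso z dz _ ht0 (by rw [h]; exact (edz e he h1).2)
      · exact iso _ h0 _ ht0 (by conv => arg 4; rw [h]
                                 exact (lnk e he h1 h0).2.2)
    · obtain ⟨k1, k2, k3⟩ := s0inc w hw hdw
      rcases Lcases e _ hf with hk | hk | ⟨h0, hk⟩
      · rw [hk] at k2; exact iso u0 du0 e he k2
      · have := (edz e he h1).2
        rw [← hk] at this
        rcases Inc.two k2 k3 k1.symm this with hk | hk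
        · exact hzu hk.symm
        · exact hdw (hk ▸ dz)
      · obtain ⟨l1, l2, l3⟩ := lnk e he h1 h0
        rw [← hk] at l2 l3
        have a1 : φ e = u0 := by
          rcases Inc.two k2 k3 k1.symm l3 with hk | hk
          · exact hk
          · exact absurd (hk ▸ h0) hdw
        have a2 : s e = w := by
          rcases Inc.two k2 k3 k1.symm l2 with hk | hk
          · exact absurd (hk ▸ du0) (sdg e he)
          · exact hk
        apply hwq
        show w = s (h u0)
        rw [← a2, ← a1, h3.2.2]
  have disjL : ∀ e ∈ T, e ≠ t0 → ∀ f ∈ T, f ≠ t0 → e ≠ f → ∀ x, x ∈ L e → x ∉ L f := by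
    intro e he h1 f hf h2 hne x hx hx'
    have hp := φinj e he h1 f hf h2 hne
    have k1 := hφ e he h1
    have k2 := hφ f hf h2
    rcases Lcases e _ hx with a | a | ⟨a0, a⟩ <;> rcases Lcases f _ hx' with b | b | ⟨b0, b⟩
    · exact hne (a.symm.trans b)
    · have := (edz f hf h2).2
      rw [← b, a] at this
      exact iso z dz e he this
    · have := (lnk f hf h2 b0).2.2
      rw [← b, a] at this
      exact iso _ b0 e he this
    · have := (edz e he h1).2
      rw [← a, b] at this
      exact iso z dz f hf this
    · have l1 := (edz e he h1)
      have l2 := (edz f hf h2)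
      rw [← a] at l1
      rw [← b] at l2
      rcases Inc.two l1.1 l1.2 k1.2.1 l2.1 with h | h
      · exact hp h.symm
      · exact k2.2.1 h
    · have l1 := (edz e he h1)
      rw [← a, b] at l1
      exact zlink f hf h2 b0 l1.2
    · have := (lnk e he h1 a0).2.2
      rw [← a, b] at this
      exact iso _ a0 f hf this
    · have l1 := (edz f hf h2)
      rw [← b, a] at l1
      exact zlink e he h1 a0 l1.2
    · obtain ⟨l1, l2, l3⟩ := lnk e he h1 a0
      obtain ⟨m1, m2, m3⟩ := lnk f hf h2 b0
      rw [← a] at l2 l3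
      rw [← b] at m2 m3
      rcases Inc.two l2 l3 l1 m3 with h | h
      · exact sdg e he (h ▸ b0)
      · exact hp h.symm
  have insL : ∀ e ∈ T, e ≠ t0 → ∀ x, x ∈ L e → s x ∈ C ∧ t x ∈ C := by
    intro e he h1 x hx
    have k1 := hφ e he h1
    rcases Lcases e _ hx with a | a | ⟨a0, a⟩
    · rw [a]; exact hT e he
    · rw [a]; exact inside_of_inc k1.1 hz k1.2.1 (edz e he h1).1 (edz e he h1).2
    · obtain ⟨l1, l2, l3⟩ := lnk e he h1 a0
      rw [a]; exact inside_of_inc (hT e he).1 k1.1 l1 l2 l3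
  have cnL : ∀ e ∈ T, e ≠ t0 → Cn (Shr s t) (L e) := by
    intro e he h1
    by_cases h0 : dg s t T (φ e) = 0
    · obtain ⟨l1, l2, l3⟩ := lnk e he h1 h0
      simp only [L, h0, if_true]
      refine Cn.insert (a := ed (s e) (φ e)) (Cn.insert (a := ed (φ e) z) (Cn.singleton _ _) rfl ?_)
        (by simp) ?_
      · exact ⟨φ e, l3, (edz e he h1).1⟩
      · exact ⟨s e, Or.inl rfl, l2⟩
    · simp only [L, h0, if_false]
      refine Cn.insert (a := ed (φ e) z) (Cn.singleton _ _) rfl ?_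
      exact ⟨φ e, φinc e he h1 h0, (edz e he h1).1⟩
  refine ⟨fun e => if e = t0 then insert t0 S0 else L e, ?_, ?_, ?_, ?_, ?_⟩
  · intro e he
    by_cases h : e = t0
    · simp [h]
    · simp only [if_neg h]; exact Lmem e
  · intro e he
    by_cases h : e = t0
    · simp only [if_pos h]
      obtain ⟨f, hf, hff⟩ := touch0 t0 ht0
      refine Cn.insert (Cn.star u0 ?_) hf hff
      rintro e ⟨w, hw, hdw, _, rfl⟩
      exact (s0inc w hw hdw).2.1
    · simp only [if_neg h]; exact cnL e he h
  · intro e he f hf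
    by_cases h : e = t0
    · simp only [if_pos h] at hf
      rcases hf with rfl | ⟨w, hw, hdw, _, rfl⟩
      · exact hT _ ht0
      · have := s0inc w hw hdw
        exact inside_of_inc hu0 hw this.1.symm this.2.1 this.2.2
    · simp only [if_neg h] at hf; exact insL e he h f hf
  · intro e he f hf hne
    by_cases h : e = t0 <;> by_cases h' : f = t0
    · exact absurd (h.trans h'.symm) hne
    · simp only [if_pos h, if_neg h']; exact (Set.disjoint_left.2 (disj0 f hf h')).symm
    · simp only [if_pos h', if_neg h]; exact (Set.disjoint_left.2 (disj0 e he h))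
    · simp only [if_neg h, if_neg h']; exact Set.disjoint_left.2 (disjL e he h f hf h' hne)
  · intro e he f hf hne
    by_cases h : e = t0 <;> by_cases h' : f = t0
    · exact absurd (h.trans h'.symm) hne
    · simp only [if_pos h, if_neg h']
      obtain ⟨x, hx, hxf⟩ := touch0 f hf
      exact ⟨x, Or.inr hx, f, Lmem f, hxf.symm⟩
    · simp only [if_pos h', if_neg h]
      obtain ⟨x, hx, hxf⟩ := touch0 e he
      exact ⟨e, Lmem e, x, Or.inr hx, hxf⟩
    · simp only [if_neg h, if_neg h']
      exact ⟨_, Lz e, _, Lz f, z, (edz e he h).2, (edz f hf h').2⟩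

theorem complete_lemma {s t : E → V} (hl : ∀ e, s e ≠ t e) [DecidableEq V] [DecidableEq E]
    (ed : V → V → E)
    (hs : ∀ e f u w, u ≠ w → Inc s t u e → Inc s t w e → Inc s t u f → Inc s t w f → e = f)
    (n : ℕ) : ∀ (C : Finset V) (T : Finset E), C.card = n → T.card = n →
    (∀ u ∈ C, ∀ w ∈ C, u ≠ w → Inc s t u (ed u w) ∧ Inc s t w (ed u w)) →
    (∀ e ∈ T, s e ∈ C ∧ t e ∈ C) → ∃ B, Ok s t T C B := by
  classical
  induction n with
  | zero =>
    intro C T _ hT _ _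
    rw [Finset.card_eq_zero] at hT
    subst hT
    exact ⟨fun _ => ∅, by simp [Ok]⟩
  | succ n ih =>
    intro C T hC hTc hed hT
    by_cases h3 : C.card ≤ 3
    · refine ⟨fun e => {e}, by simp, fun e _ => Cn.singleton _ _, ?_, ?_, ?_⟩
      · intro e he f hf
        rw [Set.mem_singleton_iff] at hf; subst hf; exact hT _ he
      · intro e _ f _ h; simpa using h
      · intro e he f hf h
        exact ⟨e, rfl, f, rfl, share_of_card_le hl h3 (hT e he) (hT f hf)⟩
    have hsum := sum_dg hl hT
    have her : ∀ z, ∀ u, u ∈ C.erase z → u ∈ C := fun z u hu => Finset.mem_of_mem_erase hu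
    by_cases hd1 : ∃ z ∈ C, dg s t T z = 1
    · obtain ⟨z, hz, hd⟩ := hd1
      unfold dg at hd
      rw [Finset.card_eq_one] at hd
      obtain ⟨t0, ht0⟩ := hd
      have m0 : t0 ∈ T.filter (fun e => Inc s t z e) := by rw [ht0]; simp
      rw [Finset.mem_filter] at m0
      have h1 : ∀ e ∈ T, Inc s t z e → e = t0 := by
        intro e he hze
        have : e ∈ T.filter (fun e => Inc s t z e) := by simp [he, hze]
        rw [ht0] at this; simpa using this
      obtain ⟨B, hB⟩ := ih (C.erase z) (T.erase t0) (by rw [Finset.card_erase_of_mem hz]; omega)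
        (by rw [Finset.card_erase_of_mem m0.1]; omega)
        (fun u hu w hw => hed u (her z u hu) w (her z w hw)) (by
          intro e he
          rw [Finset.mem_erase] at he
          have := hT e he.2
          have h2 : ¬ Inc s t z e := fun h => he.1 (h1 e he.2 h)
          unfold Inc at h2
          simp only [Finset.mem_erase]
          grind)
      exact complete_step1 hl ed hed hT hz m0.1 m0.2 h1 hB
    by_cases hd2 : ∃ z ∈ C, dg s t T z = 2
    · obtain ⟨z, hz, hd⟩ := hd2
      have hd' := hd
      unfold dg at hd
      rw [Finset.card_eq_two] at hd
      have main : ∀ t1 t2 : E, t1 ≠ t2 → T.filter (fun e => Inc s t z e) = {t1, t2} →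
          ∀ a, Inc s t a t1 → a ≠ z → (∃ e, e ∉ T ∧ Inc s t a e ∧ s e ∈ C.erase z ∧ t e ∈ C.erase z) →
          ∃ B, Ok s t T C B := by
        intro t1 t2 h12 hf a ha haz ⟨e, heT, hae, hin⟩
        have m1 : t1 ∈ T.filter (fun e => Inc s t z e) := by rw [hf]; simp
        have m2 : t2 ∈ T.filter (fun e => Inc s t z e) := by rw [hf]; simp
        rw [Finset.mem_filter] at m1 m2
        have h1 : ∀ e ∈ T, Inc s t z e → e = t1 ∨ e = t2 := by
          intro e he hze
          have : e ∈ T.filter (fun e => Inc s t z e) := by simp [he, hze]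
          rw [hf] at this; simpa using this
        obtain ⟨B, hB⟩ := ih (C.erase z) (insert e ((T.erase t1).erase t2))
          (by rw [Finset.card_erase_of_mem hz]; omega)
          (by
            rw [Finset.card_insert_of_notMem (by simp [heT]),
              Finset.card_erase_of_mem (by simp [m2.1, h12.symm]), Finset.card_erase_of_mem m1.1]
            omega)
          (fun u hu w hw => hed u (her z u hu) w (her z w hw)) (by
            intro f hf
            rw [Finset.mem_insert] at hf
            rcases hf with rfl | hf
            · exact hin
            simp only [Finset.mem_erase] at hf
            have := hT f hf.2.2
            have h2 : ¬ Inc s t z f := fun h => by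
              rcases h1 f hf.2.2 h with h | h
              · exact hf.2.1 h
              · exact hf.1 h
            unfold Inc at h2
            simp only [Finset.mem_erase]
            grind)
        exact complete_step2 hl ed hed hT hz m1.1 m2.1 h12 m1.2 m2.2 h1 ha haz heT hae hB
      obtain ⟨t1, t2, h12, hf⟩ := hd
      have m1 : t1 ∈ T.filter (fun e => Inc s t z e) := by rw [hf]; simp
      have m2 : t2 ∈ T.filter (fun e => Inc s t z e) := by rw [hf]; simp
      rw [Finset.mem_filter] at m1 m2
      obtain ⟨a, haz, ha⟩ := other_end hl t1 z
      obtain ⟨b, hbz, hb⟩ := other_end hl t2 z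
      have hCof : ∀ e ∈ T, ∀ w, Inc s t w e → w ∈ C := by
        intro e he w hw
        rcases hw with rfl | rfl
        · exact (hT e he).1
        · exact (hT e he).2
      have haC := hCof t1 m1.1 a ha
      have hbC := hCof t2 m2.1 b hb
      have hab : a ≠ b := by
        rintro rfl
        exact h12 (hs t1 t2 a z haz ha m1.2 hb m2.2)
      by_cases hA : ∃ e, e ∉ T ∧ Inc s t a e ∧ s e ∈ C.erase z ∧ t e ∈ C.erase z
      · exact main t1 t2 h12 hf a ha haz hA
      by_cases hB : ∃ e, e ∉ T ∧ Inc s t b e ∧ s e ∈ C.erase z ∧ t e ∈ C.erase z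
      · exact main t2 t1 h12.symm (by rw [hf, Finset.pair_comm]) b hb hbz hB
      exfalso
      have full : ∀ a ∈ C, a ≠ z → (∃ e ∈ T, Inc s t a e ∧ Inc s t z e) →
          (¬ ∃ e, e ∉ T ∧ Inc s t a e ∧ s e ∈ C.erase z ∧ t e ∈ C.erase z) →
          ∀ w ∈ C, w ≠ a → ed a w ∈ T := by
        intro a haC haz ⟨e, he, hae, hze⟩ hA w hw hwa
        have h1 := hed a haC w hw hwa.symm
        by_cases hwz : w = z
        · subst hwz
          rw [hs (ed a w) e a w haz h1.1 h1.2 hae hze]; exact he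
        · by_contra hc
          refine hA ⟨ed a w, hc, h1.1, ?_⟩
          exact inside_of_inc (u := a) (w := w) (by simp [haC, haz]) (by simp [hw, hwz]) hwa.symm
            h1.1 h1.2
      have fa := full a haC haz ⟨t1, m1.1, ha, m1.2⟩ hA
      have fb := full b hbC hbz ⟨t2, m2.1, hb, m2.2⟩ hB
      have big : ∀ a ∈ C, (∀ w ∈ C, w ≠ a → ed a w ∈ T) → C.card ≤ dg s t T a + 1 := by
        intro a ha fa
        have : (C.erase a).card ≤ dg s t T a := by
          unfold dg
          refine Finset.card_le_card_of_injOn (fun w => ed a w) ?_ ?_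
          · intro w hw
            have hw' := Finset.mem_erase.1 hw
            simp only [Finset.coe_filter, Set.mem_setOf_eq]
            exact ⟨fa w hw'.2 hw'.1, (hed a ha w hw'.2 hw'.1.symm).1⟩
          · intro w hw w' hw' hww
            have hw := Finset.mem_erase.1 hw
            have hw' := Finset.mem_erase.1 hw'
            have k1 := hed a ha w hw.2 hw.1.symm
            have k2 := hed a ha w' hw'.2 hw'.1.symm
            simp only at hww
            rw [← hww] at k2
            rcases Inc.two k1.1 k1.2 hw.1.symm k2.2 with h | h
            · exact absurd h hw'.1
            · exact h.symm
        rw [Finset.card_erase_of_mem ha] at this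
        omega
      have ga := big a haC fa
      have gb := big b hbC fb
      have hle : ∀ w ∈ (C.erase a).erase b, 2 ≤ dg s t T w := by
        intro w hw
        simp only [Finset.mem_erase] at hw
        have k1 := hed a haC w hw.2.2 hw.2.1.symm
        have k2 := hed b hbC w hw.2.2 hw.1.symm
        have hne : ed a w ≠ ed b w := by
          intro h
          rw [← h] at k2
          rcases Inc.two k1.1 k1.2 hw.2.1.symm k2.1 with h | h
          · exact hab h.symm
          · exact hw.1 h.symm
        rw [← Finset.card_pair hne]
        unfold dg
        apply Finset.card_le_card
        intro e he
        simp only [Finset.mem_insert, Finset.mem_singleton] at he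
        rw [Finset.mem_filter]
        rcases he with rfl | rfl
        · exact ⟨fa w hw.2.2 hw.2.1, k1.2⟩
        · exact ⟨fb w hw.2.2 hw.1, k2.2⟩
      have h5 : ((C.erase a).erase b).card * 2 ≤ ∑ w ∈ (C.erase a).erase b, dg s t T w := by
        simpa using Finset.card_nsmul_le_sum _ _ _ hle
      have hbm : b ∈ C.erase a := by simp [hab.symm, hbC]
      rw [← Finset.add_sum_erase _ _ haC, ← Finset.add_sum_erase _ _ hbm] at hsum
      rw [Finset.card_erase_of_mem hbm, Finset.card_erase_of_mem haC] at h5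
      omega
    push Not at hd1 hd2
    have hdd : ∀ w ∈ C, dg s t T w = 0 ∨ 3 ≤ dg s t T w := by
      intro w hw
      have := hd1 w hw
      have := hd2 w hw
      omega
    have hex : ∃ z ∈ C, ∃ u ∈ C, u ≠ z ∧ dg s t T z = 0 ∧ dg s t T u = 0 := by
      by_contra hcon
      push Not at hcon
      by_cases hzz : ∃ z ∈ C, dg s t T z = 0
      · obtain ⟨z, hz, hz0⟩ := hzz
        have hle : ∀ w ∈ C.erase z, 3 ≤ dg s t T w := by
          intro w hw
          rw [Finset.mem_erase] at hw
          exact (hdd w hw.2).resolve_left (hcon z hz w hw.2 hw.1 hz0)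
        have h5 : (C.erase z).card * 3 ≤ ∑ w ∈ C.erase z, dg s t T w := by
          simpa using Finset.card_nsmul_le_sum _ _ _ hle
        rw [← Finset.add_sum_erase _ _ hz] at hsum
        rw [Finset.card_erase_of_mem hz] at h5
        omega
      · push Not at hzz
        have hle : ∀ w ∈ C, 3 ≤ dg s t T w := fun w hw => (hdd w hw).resolve_left (hzz w hw)
        have h5 : C.card * 3 ≤ ∑ w ∈ C, dg s t T w := by
          simpa using Finset.card_nsmul_le_sum _ _ _ hle
        omega
    obtain ⟨z, hz, u, hu, huz, hz0, hu0⟩ := hex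
    exact complete_step3 hl ed hed hT (by omega) (fun w hw => by
      rcases hdd w hw with h | h
      · exact Or.inl h
      · exact Or.inr (by omega)) hz hu huz hz0 hu0

end complete2

end KTM

namespace KTM
section contr
variable {V E K : Type*}

theorem Pth.cn {R : Finset (E × E)} {r : E → E → Prop} (hr : ∀ e f, (e, f) ∈ R → r e f ∧ r f e)
    {a b : E} {F : Set E} (p : Pth R a b F) : Cn r F := by
  induction p with
  | nil a => exact Cn.singleton _ _
  | @cons a b c F h p ha ih =>
    have hb := p.start_mem
    intro P ⟨e', he', hP⟩ hc
    have hPb : P b := by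
      rcases he' with rfl | he'
      · exact hc _ (by simp) b (by simp [hb]) hP (hr _ _ h).1
      · exact ih P ⟨e', he', hP⟩ (fun x hx y hy => hc x (by simp [hx]) y (by simp [hy])) b hb
    have hall := ih P ⟨b, hb, hPb⟩ (fun x hx y hy => hc x (by simp [hx]) y (by simp [hy]))
    rintro f (rfl | hf)
    · exact hc b (by simp [hb]) _ (by simp) hPb (hr _ _ h).2
    · exact hall f hf

theorem Pth.all {R : Finset (E × E)} {D : E → Prop} (hr : ∀ e f, (e, f) ∈ R → D e)
    {a b : E} {F : Set E} (p : Pth R a b F) (hb : D b) : ∀ x ∈ F, D x := by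
  induction p with
  | nil a => intro x hx; rw [Set.mem_singleton_iff] at hx; rw [hx]; exact hb
  | @cons a b c F h p ha ih =>
    rintro x (rfl | hx)
    · exact hr _ _ h
    · exact ih hb x hx

theorem menger_edges [Fintype E] (s t : E → V) (D : E → Prop) (A B : Finset E)
    (hBD : ∀ b ∈ B, D b) :
    (∃ F : E → Set E, (∀ b ∈ B, b ∈ F b ∧ (∃ a ∈ A, a ∈ F b) ∧ Cn (Shr s t) (F b) ∧
      ∀ x ∈ F b, D x) ∧ ∀ b ∈ B, ∀ b' ∈ B, b ≠ b' → Disjoint (F b) (F b')) ∨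
    (∃ (S : Finset E) (U : Set E), S.card < B.card ∧ (∀ a ∈ A, a ∉ S → a ∈ U) ∧
      (∀ e ∈ U, e ∉ S) ∧ (∀ e ∈ U, ∀ f, Shr s t e f → D e → D f → f ∉ S → f ∈ U) ∧
      (∀ b ∈ B, b ∉ U)) := by
  classical
  let R : Finset (E × E) := Finset.univ.filter (fun p => Shr s t p.1 p.2 ∧ D p.1 ∧ D p.2)
  have hR : ∀ e f, (e, f) ∈ R ↔ Shr s t e f ∧ D e ∧ D f := by
    intro e f; simp [R]
  by_cases h : ∀ S : Finset E, Sep R S A B → B.card ≤ S.card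
  · left
    obtain ⟨g, F, h1, h2⟩ := menger R A B h
    refine ⟨F, fun b hb => ⟨(h1 b hb).2.end_mem, ⟨g b, (h1 b hb).1, (h1 b hb).2.start_mem⟩, ?_, ?_⟩,
      h2⟩
    · exact (h1 b hb).2.cn (fun e f hef => ⟨((hR e f).1 hef).1, ((hR e f).1 hef).1.symm⟩)
    · exact (h1 b hb).2.all (fun e f hef => ((hR e f).1 hef).2.1) (hBD b hb)
  · right
    push Not at h
    obtain ⟨S, hS, hc⟩ := h
    refine ⟨S, {e | ∃ a ∈ A, ∃ F, Pth R a e F ∧ Disjoint F (S : Set E)}, hc, ?_, ?_, ?_, ?_⟩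
    · intro a ha haS
      exact ⟨a, ha, {a}, Pth.nil a, by simpa using haS⟩
    · rintro e ⟨a, ha, F, p, hd⟩ he
      exact Set.disjoint_left.1 hd p.end_mem he
    · rintro e ⟨a, ha, F, p, hd⟩ f hef h1 h2 hfS
      have q : Pth R e f (if e = f then {e} else {e, f}) := by
        by_cases h : e = f
        · subst h; simpa using Pth.nil e
        · rw [if_neg h]
          exact Pth.cons ((hR e f).2 ⟨hef, h1, h2⟩) (Pth.nil f) (by simpa using h)
      obtain ⟨F', hF', p'⟩ := p.concat_subset q
      refine ⟨a, ha, F', p', ?_⟩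
      rw [Set.disjoint_left] at hd ⊢
      intro x hx
      rcases hF' hx with hx | hx
      · exact hd hx
      · have : x = e ∨ x = f := by
          by_cases h : e = f
          · rw [if_pos h] at hx; left; simpa using hx
          · rw [if_neg h] at hx; simpa using hx
        rcases this with rfl | rfl
        · exact hd p.end_mem
        · simpa using hfS
    · rintro b hb ⟨a, ha, F, p, hd⟩
      obtain ⟨x, hx1, hx2⟩ := hS a ha b hb F p
      exact Set.disjoint_left.1 hd hx1 hx2

/-- A Kempe colouring of the edges of a multigraph. -/
structure Kmp (s t : E → V) (c : E → K) : Prop where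
  loop : ∀ e, s e ≠ t e
  proper : ∀ e f, c e = c f → Shr s t e f → e = f
  kempe : ∀ i j, i ≠ j → Cn (Shr s t) {e | c e = i ∨ c e = j}

/-- A clique minor of the line graph traversed by `T`. -/
def Minor (s t : E → V) (T : K → E) : Prop :=
  ∃ B : K → Set E, (∀ k, T k ∈ B k) ∧ (∀ k, Cn (Shr s t) (B k)) ∧
    (∀ i j, i ≠ j → Disjoint (B i) (B j)) ∧
    (∀ i j, i ≠ j → ∃ a ∈ B i, ∃ b ∈ B j, Shr s t a b)

theorem Minor.trivial {s t : E → V} {T : K → E} (c : E → K) (hT : ∀ k, c (T k) = k)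
    (h : ∀ i j, i ≠ j → Shr s t (T i) (T j)) :
    Minor s t T := by
  refine ⟨fun k => {T k}, fun k => rfl, fun k => Cn.singleton _ _, ?_, ?_⟩
  · intro i j hij
    rw [Set.disjoint_singleton]
    intro h
    exact hij (by rw [← hT i, ← hT j, h])
  · intro i j hij
    exact ⟨_, rfl, _, rfl, h i j hij⟩

end contr

end KTM

namespace KTM
section contr2
variable {V E K : Type*}

/-- Both ends in `X`. -/
def Ins (s t : E → V) (X : Set V) (e : E) : Prop := s e ∈ X ∧ t e ∈ X

/-- Some end in `X`. -/
def Dn (s t : E → V) (X : Set V) (e : E) : Prop := s e ∈ X ∨ t e ∈ X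

theorem Dn.of_inc {s t : E → V} {X : Set V} {e : E} {w : V} (hw : w ∈ X) (h : Inc s t w e) :
    Dn s t X e := by
  rcases h with rfl | rfl
  · exact Or.inl hw
  · exact Or.inr hw

theorem Ins.of_inc {s t : E → V} {X : Set V} {e : E} {w : V} (he : Ins s t X e)
    (h : Inc s t w e) : w ∈ X := by
  rcases h with rfl | rfl
  · exact he.1
  · exact he.2

open Classical in
/-- contraction map of `X` to `v` -/
noncomputable def ctr (X : Set V) (v : V) (u : V) : V := if u ∈ X then v else u

theorem inc_ctr {s t : E → V} {X : Set V} {v : V} {u : V} {e : {e // ¬ Ins s t X e}} :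
    Inc (fun e : {e // ¬ Ins s t X e} => ctr X v (s e)) (fun e => ctr X v (t e)) u e ↔
      ∃ w, Inc s t w e ∧ u = ctr X v w := by
  unfold Inc
  constructor
  · rintro (h | h)
    · exact ⟨_, Or.inl rfl, h⟩
    · exact ⟨_, Or.inr rfl, h⟩
  · rintro ⟨w, rfl | rfl, h⟩
    · exact Or.inl h
    · exact Or.inr h

theorem shr_ctr {s t : E → V} {X : Set V} {v : V} (hv : v ∈ X) {e f : {e // ¬ Ins s t X e}} :
    Shr (fun e : {e // ¬ Ins s t X e} => ctr X v (s e)) (fun e => ctr X v (t e)) e f ↔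
      Shr s t e f ∨ (Dn s t X e ∧ Dn s t X f) := by
  classical
  constructor
  · rintro ⟨u, h1, h2⟩
    rw [inc_ctr] at h1 h2
    obtain ⟨w, hw, h1⟩ := h1
    obtain ⟨w', hw', h2⟩ := h2
    unfold ctr at h1 h2
    by_cases a : w ∈ X <;> by_cases b : w' ∈ X
    · exact Or.inr ⟨Dn.of_inc a hw, Dn.of_inc b hw'⟩
    · simp only [a, b, if_true, if_false] at h1 h2
      exact absurd (h2 ▸ h1 ▸ hv) b
    · simp only [a, b, if_true, if_false] at h1 h2
      exact absurd (h1 ▸ h2 ▸ hv) a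
    · simp only [a, b, if_false] at h1 h2
      exact Or.inl ⟨w, hw, by rw [← h1, h2]; exact hw'⟩
  · have key : ∀ e : {e // ¬ Ins s t X e}, Dn s t X e →
        Inc (fun e : {e // ¬ Ins s t X e} => ctr X v (s e)) (fun e => ctr X v (t e)) v e := by
      rintro e (h | h)
      · exact inc_ctr.2 ⟨_, Or.inl rfl, by simp [ctr, h]⟩
      · exact inc_ctr.2 ⟨_, Or.inr rfl, by simp [ctr, h]⟩
    rintro (⟨w, h1, h2⟩ | ⟨h1, h2⟩)
    · exact ⟨ctr X v w, inc_ctr.2 ⟨w, h1, rfl⟩, inc_ctr.2 ⟨w, h2, rfl⟩⟩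
    · exact ⟨v, key e h1, key f h2⟩

theorem ctr_kmp {s t : E → V} {c : E → K} (hK : Kmp s t c) {X : Set V} {v : V} (hv : v ∈ X)
    (hinj : ∀ e f, Dn s t X e → ¬ Ins s t X e → Dn s t X f → ¬ Ins s t X f → c e = c f → e = f) :
    Kmp (fun e : {e // ¬ Ins s t X e} => ctr X v (s e)) (fun e => ctr X v (t e))
      (fun e => c e) := by
  classical
  refine ⟨?_, ?_, ?_⟩
  · rintro ⟨e, he⟩ h
    simp only [ctr] at h
    have := hK.loop e
    unfold Ins at he
    by_cases a : s e ∈ X <;> by_cases b : t e ∈ X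
    · exact he ⟨a, b⟩
    · simp only [a, b, if_true, if_false] at h; exact b (h ▸ hv)
    · simp only [a, b, if_true, if_false] at h; exact a (h ▸ hv)
    · simp only [a, b, if_false] at h; exact this h
  · intro e f hc h
    rw [shr_ctr hv] at h
    apply Subtype.ext
    rcases h with h | h
    · exact hK.proper _ _ hc h
    · exact hinj _ _ h.1 e.2 h.2 f.2 hc
  · intro i j hij P ⟨e0, he0, hP0⟩ hcl
    have hcl' : ∀ e f : {e // ¬ Ins s t X e}, (c e = i ∨ c e = j) → (c f = i ∨ c f = j) → P e →
        (Shr s t e f ∨ (Dn s t X e ∧ Dn s t X f)) → P f :=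
      fun e f h1 h2 h3 h4 => hcl e h1 f h2 h3 ((shr_ctr hv).2 h4)
    let Q : E → Prop := fun e => (∃ h, P ⟨e, h⟩) ∨ (Ins s t X e ∧
      ∃ f, ∃ h, P ⟨f, h⟩ ∧ Dn s t X f ∧ (c f = i ∨ c f = j))
    have := hK.kempe i j hij Q ⟨e0, he0, Or.inl ⟨e0.2, hP0⟩⟩ ?_
    · intro f hf
      rcases this f hf with ⟨h, hP⟩ | ⟨h, _⟩
      · exact hP
      · exact absurd h f.2
    · intro e he f hf hQ hef
      obtain ⟨w, hwe, hwf⟩ := id hef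
      by_cases hfI : Ins s t X f
      · right
        refine ⟨hfI, ?_⟩
        have hw := hfI.of_inc hwf
        rcases hQ with ⟨h, hP⟩ | ⟨_, h⟩
        · exact ⟨e, h, hP, Dn.of_inc hw hwe, he⟩
        · exact h
      · left
        refine ⟨hfI, ?_⟩
        rcases hQ with ⟨h, hP⟩ | ⟨hI, g, hg, hP, hD, hgc⟩
        · exact hcl' ⟨e, h⟩ ⟨f, hfI⟩ he hf hP (Or.inl hef)
        · exact hcl' ⟨g, hg⟩ ⟨f, hfI⟩ hgc hf hP (Or.inr ⟨hD, Dn.of_inc (hI.of_inc hwe) hwf⟩)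

theorem ctr_lift {s t : E → V} {X : Set V} {v : V} (hv : v ∈ X) {T : K → E}
    (hT : ∀ k, ¬ Ins s t X (T k)) (F : E → Set E)
    (hF : ∀ b, Dn s t X b → ¬ Ins s t X b → b ∈ F b ∧ (∃ a, Inc s t v a ∧ a ∈ F b) ∧
      Cn (Shr s t) (F b) ∧ ∀ x ∈ F b, Dn s t X x)
    (hd : ∀ b, Dn s t X b → ¬ Ins s t X b → ∀ b', Dn s t X b' → ¬ Ins s t X b' → b ≠ b' →
      Disjoint (F b) (F b'))
    (hM : Minor (fun e : {e // ¬ Ins s t X e} => ctr X v (s e)) (fun e => ctr X v (t e))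
      (fun k => (⟨T k, hT k⟩ : {e // ¬ Ins s t X e}))) : Minor s t T := by
  obtain ⟨B, b1, b2, b3, b4⟩ := hM
  let B1 : K → Set E := fun k => {e | ∃ h, (⟨e, h⟩ : {e // ¬ Ins s t X e}) ∈ B k}
  let G : K → Set E := fun k => {e | e ∈ B1 k ∨ ∃ b, Dn s t X b ∧ b ∈ B1 k ∧ e ∈ F b}
  have hB1 : ∀ k e, e ∈ B1 k → ¬ Ins s t X e := fun k e ⟨h, _⟩ => h
  have hBd : ∀ i j, i ≠ j → ∀ e, e ∈ B1 i → e ∉ B1 j := by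
    rintro i j hij e ⟨h, he⟩ ⟨h', he'⟩
    exact Set.disjoint_left.1 (b3 i j hij) he he'
  have uniq : ∀ b, Dn s t X b → ¬ Ins s t X b → ∀ b', Dn s t X b' → ¬ Ins s t X b' →
      ∀ e, e ∈ F b → e ∈ F b' → b = b' := by
    intro b h1 h2 b' h3 h4 e h5 h6
    by_contra hne
    exact Set.disjoint_left.1 (hd b h1 h2 b' h3 h4 hne) h5 h6
  refine ⟨G, fun k => Or.inl ⟨hT k, b1 k⟩, ?_, ?_, ?_⟩
  · intro k P ⟨e0, he0, hP0⟩ hcl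
    have hFs : ∀ b, Dn s t X b → b ∈ B1 k → ∀ x ∈ F b, P x → ∀ y ∈ F b, P y := by
      intro b h1 h2 x hx hP
      exact (hF b h1 (hB1 k b h2)).2.2.1 P ⟨x, hx, hP⟩ (fun e he f hf =>
        hcl e (Or.inr ⟨b, h1, h2, he⟩) f (Or.inr ⟨b, h1, h2, hf⟩))
    have hst : ∃ e ∈ B1 k, P e := by
      rcases he0 with he0 | ⟨b, h1, h2, h3⟩
      · exact ⟨e0, he0, hP0⟩
      · exact ⟨b, h2, hFs b h1 h2 e0 h3 hP0 b (hF b h1 (hB1 k b h2)).1⟩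
    obtain ⟨e1, ⟨h1, he1⟩, hP1⟩ := hst
    have hall := b2 k (fun e => P e) ⟨⟨e1, h1⟩, he1, hP1⟩ (by
      intro e he f hf hP hef
      have heB : (e : E) ∈ B1 k := ⟨e.2, he⟩
      have hfB : (f : E) ∈ B1 k := ⟨f.2, hf⟩
      rw [shr_ctr hv] at hef
      rcases hef with hef | ⟨k1, k2⟩
      · exact hcl e (Or.inl heB) f (Or.inl hfB) hP hef
      · obtain ⟨p1, ⟨x, hx, hxF⟩, -, -⟩ := hF e k1 e.2
        obtain ⟨q1, ⟨y, hy, hyF⟩, -, -⟩ := hF f k2 f.2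
        have r1 := hFs e k1 heB e p1 hP x hxF
        have r2 : P y := hcl x (Or.inr ⟨e, k1, heB, hxF⟩) y (Or.inr ⟨f, k2, hfB, hyF⟩) r1
          ⟨v, hx, hy⟩
        exact hFs f k2 hfB y hyF r2 f q1)
    rintro f (⟨h, hf⟩ | ⟨b, h1, h2, h3⟩)
    · exact hall ⟨f, h⟩ hf
    · obtain ⟨hb, hb'⟩ := id h2
      exact hFs b h1 h2 b (hF b h1 hb).1 (hall ⟨b, hb⟩ hb') f h3
  · intro i j hij
    rw [Set.disjoint_left]
    have aux : ∀ i j, i ≠ j → ∀ e, e ∈ B1 i → ∀ b, Dn s t X b → b ∈ B1 j → e ∈ F b → False := by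
      intro i j hij e he b h1 h2 h3
      have h4 := hB1 j b h2
      have h5 := (hF b h1 h4).2.2.2 e h3
      have h6 := hB1 i e he
      have := uniq b h1 h4 e h5 h6 e h3 (hF e h5 h6).1
      exact hBd i j hij e he (this ▸ h2)
    rintro e (h1 | ⟨b, h1, h2, h3⟩) (h4 | ⟨b', h4, h5, h6⟩)
    · exact hBd i j hij e h1 h4
    · exact aux i j hij e h1 b' h4 h5 h6
    · exact aux j i hij.symm e h4 b h1 h2 h3
    · have := uniq b h1 (hB1 _ _ h2) b' h4 (hB1 _ _ h5) e h3 h6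
      exact hBd i j hij b h2 (this ▸ h5)
  · intro i j hij
    obtain ⟨a, ha, b, hb, hab⟩ := b4 i j hij
    rw [shr_ctr hv] at hab
    have haB : (a : E) ∈ B1 i := ⟨a.2, ha⟩
    have hbB : (b : E) ∈ B1 j := ⟨b.2, hb⟩
    rcases hab with hab | ⟨k1, k2⟩
    · exact ⟨a, Or.inl haB, b, Or.inl hbB, hab⟩
    · obtain ⟨p1, ⟨x, hx, hxF⟩, -, -⟩ := hF a k1 a.2
      obtain ⟨q1, ⟨y, hy, hyF⟩, -, -⟩ := hF b k2 b.2
      exact ⟨x, Or.inr ⟨a, k1, haB, hxF⟩, y, Or.inr ⟨b, k2, hbB, hyF⟩, v, hx, hy⟩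

end contr2

end KTM

namespace KTM
section fullcase
variable {V E K : Type*}

theorem exists_missing [Fintype K] [DecidableEq K] (c : E → K) (Q : Finset E)
    (h : Q.card < Fintype.card K) : ∃ i, ∀ e ∈ Q, c e ≠ i := by
  by_contra hcon
  push Not at hcon
  have : (Finset.univ : Finset K) ⊆ Q.image c := by
    intro i _
    obtain ⟨e, he, h⟩ := hcon i
    exact Finset.mem_image.2 ⟨e, he, h⟩
  have h1 := Finset.card_le_card this
  have h2 := Finset.card_image_le (s := Q) (f := c)
  rw [Finset.card_univ] at h1
  omega

theorem exists_missing_ne [Fintype K] [DecidableEq K] (c : E → K) (Q : Finset E) (i : K)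
    (h : Q.card + 1 < Fintype.card K) : ∃ a b, a ≠ b ∧ a ≠ i ∧ (∀ e ∈ Q, c e ≠ a) ∧
      (∀ e ∈ Q, c e ≠ b) := by
  have h2 := Finset.card_image_le (s := Q) (f := c)
  have h3 : 1 < ((Q.image c)ᶜ).card := by
    rw [Finset.card_compl]; omega
  obtain ⟨a, ha, b, hb, hab⟩ := Finset.one_lt_card.1 h3
  have key : ∀ a, a ∈ (Q.image c)ᶜ → ∀ e ∈ Q, c e ≠ a := by
    intro a ha e he hc
    rw [Finset.mem_compl, Finset.mem_image] at ha
    exact ha ⟨e, he, hc⟩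
  by_cases h : a = i
  · exact ⟨b, a, hab.symm, fun h' => hab (h.trans h'.symm), key b hb, key a ha⟩
  · exact ⟨a, b, hab, h, key a ha, key b hb⟩

theorem full_case [Fintype E] [Fintype K] {s t : E → V} {c : E → K} (hK : Kmp s t c)
    {T : K → E} (hT : ∀ k, c (T k) = k) (v : V) (hv : ∀ k, ∃ e, c e = k ∧ Inc s t v e)
    (IH : ∀ (X : Set V), (∃ e, Ins s t X e) → ∀ hX : (∀ k, ¬ Ins s t X (T k)),
      Kmp (fun e : {e // ¬ Ins s t X e} => ctr X v (s e)) (fun e => ctr X v (t e))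
        (fun e => c e) →
      Minor (fun e : {e // ¬ Ins s t X e} => ctr X v (s e)) (fun e => ctr X v (t e))
        (fun k => (⟨T k, hX k⟩ : {e // ¬ Ins s t X e}))) : Minor s t T := by
  classical
  have Tinj : Function.Injective T := fun a b h => by rw [← hT a, ← hT b, h]
  let A : Finset E := Finset.univ.filter (fun e => Inc s t v e)
  have hA : ∀ e, e ∈ A ↔ Inc s t v e := by intro e; simp [A]
  have hTB : (Finset.univ.image T).card = Fintype.card K := by
    rw [Finset.card_image_of_injective _ Tinj, Finset.card_univ]
  have hTm : ∀ k, T k ∈ Finset.univ.image T := fun k => Finset.mem_image_of_mem _ (Finset.mem_univ k)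
  rcases menger_edges s t (fun _ => True) A (Finset.univ.image T) (fun _ _ => True.intro) with
    ⟨F, h1, h2⟩ | ⟨S, U, hSc, hAU, hUS, hUc, hTU⟩
  · refine ⟨fun k => F (T k), fun k => (h1 _ (hTm k)).1, fun k => (h1 _ (hTm k)).2.2.1, ?_, ?_⟩
    · intro i j hij
      exact h2 _ (hTm i) _ (hTm j) (fun h => hij (Tinj h))
    · intro i j hij
      obtain ⟨a, ha, haF⟩ := (h1 _ (hTm i)).2.1
      obtain ⟨b, hb, hbF⟩ := (h1 _ (hTm j)).2.1
      exact ⟨a, haF, b, hbF, v, (hA a).1 ha, (hA b).1 hb⟩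
  rw [hTB] at hSc
  obtain ⟨i, hi⟩ := exists_missing c S hSc
  have hTU' : ∀ k, T k ∉ U := fun k => hTU _ (hTm k)
  have hUc' : ∀ e ∈ U, ∀ f, Shr s t e f → f ∉ S → f ∈ U := fun e he f h1 h2 =>
    hUc e he f h1 True.intro True.intro h2
  obtain ⟨ei, hei, heiv⟩ := hv i
  have heiS : ei ∉ S := fun h => hi ei h hei
  have heiU : ei ∈ U := hAU ei ((hA ei).2 heiv) heiS
  have hTiS : T i ∉ S := fun h => hi _ h (hT i)
  -- every other colour appears in S
  have happ : ∀ j, j ≠ i → ∃ e ∈ S, c e = j := by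
    intro j hj
    by_contra hcon
    push Not at hcon
    refine hTU' i (hK.kempe i j hj.symm (fun e => e ∈ U) ⟨ei, Or.inl hei, heiU⟩ ?_ (T i)
      (Or.inl (hT i)))
    intro e he f hf hU hef
    refine hUc' e hU f hef (fun hfS => ?_)
    rcases hf with hf | hf
    · exact hi f hfS hf
    · exact hcon f hfS hf
  have hSim : Finset.univ.erase i ⊆ S.image c := by
    intro j hj
    obtain ⟨e, he, h⟩ := happ j (Finset.ne_of_mem_erase hj)
    exact Finset.mem_image.2 ⟨e, he, h⟩
  have hcinj : ∀ e ∈ S, ∀ f ∈ S, c e = c f → e = f := by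
    have h1 := Finset.card_le_card hSim
    rw [Finset.card_erase_of_mem (Finset.mem_univ i), Finset.card_univ] at h1
    have h2 : (S.image c).card = S.card := by
      have := Finset.card_image_le (s := S) (f := c)
      omega
    rw [Finset.card_image_iff] at h2
    exact fun e he f hf h => h2 he hf h
  let X : Set V := {u | ∃ e ∈ U, Inc s t u e}
  have hvX : v ∈ X := ⟨ei, heiU, heiv⟩
  have hUI : ∀ e ∈ U, Ins s t X e := fun e he => ⟨⟨e, he, Or.inl rfl⟩, ⟨e, he, Or.inr rfl⟩⟩
  have hDU : ∀ e, Dn s t X e → e ∉ S → e ∈ U := by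
    rintro e (⟨f, hf, h⟩ | ⟨f, hf, h⟩) heS
    · exact hUc' f hf e ⟨_, h, Or.inl rfl⟩ heS
    · exact hUc' f hf e ⟨_, h, Or.inr rfl⟩ heS
  have hID : ∀ e, Ins s t X e → Dn s t X e := fun e h => Or.inl h.1
  have hTiD : ¬ Dn s t X (T i) := fun h => hTU' i (hDU _ h hTiS)
  have hSI : ∀ e ∈ S, ¬ Ins s t X e := by
    intro e heS heI
    have hne : c e ≠ i := hi e heS
    refine hTiD (hID _ (hK.kempe i (c e) hne.symm (fun f => Ins s t X f)
      ⟨ei, Or.inl hei, hUI ei heiU⟩ ?_ (T i) (Or.inl (hT i))))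
    intro f hf g hg hfI hfg
    obtain ⟨w, hwf, hwg⟩ := id hfg
    have hgD : Dn s t X g := Dn.of_inc (hfI.of_inc hwf) hwg
    by_cases hgS : g ∈ S
    · rcases hg with hg | hg
      · exact absurd hg (hi g hgS)
      · rw [hcinj g hgS e heS hg]; exact heI
    · exact hUI g (hDU g hgD hgS)
  have hSD : ∀ e ∈ S, Dn s t X e := by
    intro e heS
    by_contra hnD
    have hne : c e ≠ i := hi e heS
    refine hTiD (hID _ (hK.kempe i (c e) hne.symm (fun f => Ins s t X f)
      ⟨ei, Or.inl hei, hUI ei heiU⟩ ?_ (T i) (Or.inl (hT i))))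
    intro f hf g hg hfI hfg
    obtain ⟨w, hwf, hwg⟩ := id hfg
    have hgD : Dn s t X g := Dn.of_inc (hfI.of_inc hwf) hwg
    by_cases hgS : g ∈ S
    · rcases hg with hg | hg
      · exact absurd hg (hi g hgS)
      · exact absurd (hcinj g hgS e heS hg ▸ hgD) hnD
    · exact hUI g (hDU g hgD hgS)
  have hSiff : ∀ e, Dn s t X e → ¬ Ins s t X e → e ∈ S := by
    intro e h1 h2
    by_contra h3
    exact h2 (hUI e (hDU e h1 h3))
  have hTI : ∀ k, ¬ Ins s t X (T k) := by
    intro k hk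
    by_cases h : T k ∈ S
    · exact hSI _ h hk
    · exact hTU' k (hDU _ (hID _ hk) h)
  have hM := IH X ⟨ei, hUI ei heiU⟩ hTI (ctr_kmp hK hvX (fun e f h1 h2 h3 h4 h5 =>
    hcinj e (hSiff e h1 h2) f (hSiff f h3 h4) h5))
  rcases menger_edges s t (Dn s t X) A S hSD with ⟨F, h1, h2⟩ | ⟨Q, U2, hQc, hAU2, _, hU2c, hSU2⟩
  · refine ctr_lift hvX hTI F ?_ ?_ hM
    · intro b hb hb'
      obtain ⟨k1, ⟨a, k2, k3⟩, k4, k5⟩ := h1 b (hSiff b hb hb')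
      exact ⟨k1, ⟨a, (hA a).1 k2, k3⟩, k4, k5⟩
    · intro b hb hb' b' hb1 hb1' hne
      exact h2 b (hSiff b hb hb') b' (hSiff b' hb1 hb1') hne
  · exfalso
    obtain ⟨a, b, hab, hai, haQ, hbQ⟩ := exists_missing_ne c Q i (by omega)
    obtain ⟨sa, hsaS, hsac⟩ := happ a hai
    obtain ⟨ea, hea, heav⟩ := hv a
    have heaU : ea ∈ U2 := hAU2 ea ((hA ea).2 heav) (fun h => haQ ea h hea)
    have := hK.kempe a b hab (fun e => e ∈ U2 ∧ Dn s t X e)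
      ⟨ea, Or.inl hea, heaU, Dn.of_inc hvX heav⟩ ?_ sa (Or.inl hsac)
    · exact hSU2 sa hsaS this.1
    · intro e he f hf ⟨hU, hD⟩ hef
      obtain ⟨w, hwe, hwf⟩ := id hef
      have heS : e ∉ S := fun h => hSU2 e h hU
      have heI := hUI e (hDU e hD heS)
      have hfD : Dn s t X f := Dn.of_inc (heI.of_inc hwe) hwf
      refine ⟨hU2c e hU f hef hD hfD (fun hfQ => ?_), hfD⟩
      rcases hf with hf | hf
      · exact haQ f hfQ hf
      · exact hbQ f hfQ hf

end fullcase

end KTM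

namespace KTM
section nofull
variable {V E K : Type*}

open Classical in
/-- Vertices covered by a set of edges. -/
noncomputable def vs (s t : E → V) (F : Finset E) : Finset V := F.image s ∪ F.image t

theorem mem_vs {s t : E → V} {F : Finset E} {v : V} : v ∈ vs s t F ↔ ∃ e ∈ F, Inc s t v e := by
  classical
  unfold vs Inc
  simp only [Finset.mem_union, Finset.mem_image]
  constructor
  · rintro (⟨e, he, rfl⟩ | ⟨e, he, rfl⟩)
    · exact ⟨e, he, Or.inl rfl⟩
    · exact ⟨e, he, Or.inr rfl⟩
  · rintro ⟨e, he, rfl | rfl⟩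
    · exact Or.inl ⟨e, he, rfl⟩
    · exact Or.inr ⟨e, he, rfl⟩

theorem card_vs_le {s t : E → V} {F : Finset E} (hne : F.Nonempty)
    (hF : Cn (Shr s t) (F : Set E)) : (vs s t F).card ≤ F.card + 1 := by
  classical
  let 𝒢 := F.powerset.filter (fun G => G.Nonempty ∧ (vs s t G).card ≤ G.card + 1)
  obtain ⟨e0, he0⟩ := hne
  have h𝒢 : 𝒢.Nonempty := by
    refine ⟨{e0}, ?_⟩
    simp only [𝒢, Finset.mem_filter, Finset.mem_powerset, Finset.singleton_subset_iff]
    refine ⟨he0, by simp, ?_⟩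
    simp only [vs, Finset.image_singleton, Finset.card_singleton]
    exact (Finset.card_union_le _ _).trans (by simp)
  obtain ⟨G, hG, hmax⟩ := Finset.exists_max_image 𝒢 Finset.card h𝒢
  simp only [𝒢, Finset.mem_filter, Finset.mem_powerset] at hG
  obtain ⟨hGF, ⟨g, hg⟩, hGc⟩ := hG
  have : ∀ f ∈ (F : Set E), f ∈ G := by
    refine hF (fun e => e ∈ G) ⟨g, hGF hg, hg⟩ ?_
    intro e he f hf heG ⟨w, hwe, hwf⟩
    by_contra hfG
    obtain ⟨w', hw'⟩ : ∃ w', ∀ x, Inc s t x f → x = w ∨ x = w' := by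
      rcases hwf with h | h
      · exact ⟨t f, fun x hx => by unfold Inc at hx; rw [h]; exact hx⟩
      · exact ⟨s f, fun x hx => by unfold Inc at hx; rw [h]; exact hx.symm⟩
    have hsub : vs s t (insert f G) ⊆ insert w' (vs s t G) := by
      intro x hx
      rw [mem_vs] at hx
      obtain ⟨y, hy, hxy⟩ := hx
      rw [Finset.mem_insert] at hy ⊢
      rcases hy with rfl | hy
      · rcases hw' x hxy with h | h
        · right; rw [mem_vs]; exact ⟨e, heG, h ▸ hwe⟩
        · exact Or.inl h
      · right; rw [mem_vs]; exact ⟨y, hy, hxy⟩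
    have h1 := (Finset.card_le_card hsub).trans (Finset.card_insert_le _ _)
    have h2 := Finset.card_insert_of_notMem hfG
    have := hmax (insert f G) (by
      simp only [𝒢, Finset.mem_filter, Finset.mem_powerset]
      refine ⟨Finset.insert_subset hf hGF, by simp, by omega⟩)
    omega
  have hFG : F = G := Finset.Subset.antisymm this hGF
  rw [hFG]; exact hGc

theorem card_vs_matching {s t : E → V} (hl : ∀ e, s e ≠ t e) {F : Finset E}
    (hF : ∀ e ∈ F, ∀ f ∈ F, Shr s t e f → e = f) : (vs s t F).card = 2 * F.card := by
  classical
  unfold vs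
  rw [Finset.card_union_of_disjoint, Finset.card_image_of_injOn, Finset.card_image_of_injOn]
  · omega
  · intro e he f hf h
    exact hF e he f hf ⟨t e, Or.inr rfl, Or.inr h⟩
  · intro e he f hf h
    exact hF e he f hf ⟨s e, Or.inl rfl, Or.inl h⟩
  · rw [Finset.disjoint_left]
    intro x hx hx'
    rw [Finset.mem_image] at hx hx'
    obtain ⟨e, he, h1⟩ := hx
    obtain ⟨f, hf, h2⟩ := hx'
    have := hF e he f hf ⟨x, Or.inl h1.symm, Or.inr h2.symm⟩
    subst this
    exact hl e (h1.trans h2.symm)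

theorem star_or_triangle [DecidableEq V] (W : K → Finset V)
    (h2 : ∀ i, W i = ∅ ∨ ∃ x y, x ≠ y ∧ W i = {x, y})
    (hmeet : ∀ i j, (W i).Nonempty → (W j).Nonempty → ∃ z, z ∈ W i ∧ z ∈ W j) :
    (∃ p, ∀ i, W i = ∅ ∨ ∃ x, x ≠ p ∧ W i = {p, x}) ∨
      ∃ D : Finset V, D.card ≤ 3 ∧ ∀ i, W i ⊆ D := by
  by_cases h0 : ∀ i, W i = ∅
  · exact Or.inr ⟨∅, by simp, fun i => by simp [h0 i]⟩
  push Not at h0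
  obtain ⟨a, ha⟩ := h0
  obtain ⟨p, q, hpq, hW⟩ := (h2 a).resolve_left (Finset.nonempty_iff_ne_empty.1 ha)
  have star : ∀ p, (∀ i, (W i).Nonempty → p ∈ W i) → ∀ i, W i = ∅ ∨ ∃ x, x ≠ p ∧ W i = {p, x} := by
    intro p hp i
    rcases h2 i with h | ⟨x, y, hxy, h⟩
    · exact Or.inl h
    · right
      have := hp i (by rw [h]; simp)
      rw [h] at this
      simp only [Finset.mem_insert, Finset.mem_singleton] at this
      rcases this with rfl | rfl
      · exact ⟨y, hxy.symm, h⟩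
      · exact ⟨x, hxy, by rw [h, Finset.pair_comm]⟩
  by_cases hp : ∀ i, (W i).Nonempty → p ∈ W i
  · exact Or.inl ⟨p, star p hp⟩
  by_cases hq : ∀ i, (W i).Nonempty → q ∈ W i
  · exact Or.inl ⟨q, star q hq⟩
  right
  push Not at hp hq
  obtain ⟨i, hi, hip⟩ := hp
  obtain ⟨j, hj, hjq⟩ := hq
  have two : ∀ p q, p ≠ q → W a = {p, q} → ∀ i, (W i).Nonempty → p ∉ W i →
      ∃ x, x ≠ p ∧ x ≠ q ∧ W i = {q, x} := by
    intro p q hpq hW i hi hip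
    obtain ⟨z, hz1, hz2⟩ := hmeet a i ha hi
    have hzq : z = q := by
      rw [hW] at hz1
      simp only [Finset.mem_insert, Finset.mem_singleton] at hz1
      rcases hz1 with rfl | h
      · exact absurd hz2 hip
      · exact h
    subst hzq
    obtain ⟨x, y, hxy, h⟩ := (h2 i).resolve_left (Finset.nonempty_iff_ne_empty.1 hi)
    rw [h] at hz2 hip
    simp only [Finset.mem_insert, Finset.mem_singleton] at hz2 hip
    push Not at hip
    rcases hz2 with rfl | rfl
    · exact ⟨y, hip.2.symm, hxy.symm, h⟩
    · exact ⟨x, hip.1.symm, hxy, by rw [h, Finset.pair_comm]⟩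
  obtain ⟨x, hx1, hx2, hWi⟩ := two p q hpq hW i hi hip
  obtain ⟨y, hy1, hy2, hWj⟩ := two q p hpq.symm (by rw [hW, Finset.pair_comm]) j hj hjq
  have hxy : x = y := by
    obtain ⟨z, hz1, hz2⟩ := hmeet i j hi hj
    rw [hWi] at hz1
    rw [hWj] at hz2
    simp only [Finset.mem_insert, Finset.mem_singleton] at hz1 hz2
    grind
  subst hxy
  refine ⟨{p, q, x}, Finset.card_le_three, ?_⟩
  intro k
  rcases h2 k with h | ⟨u, w, huw, h⟩
  · simp [h]
  · have hk : (W k).Nonempty := by rw [h]; simp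
    obtain ⟨z1, a1, b1⟩ := hmeet a k ha hk
    obtain ⟨z2, a2, b2⟩ := hmeet i k hi hk
    obtain ⟨z3, a3, b3⟩ := hmeet j k hj hk
    rw [hW] at a1
    rw [hWi] at a2
    rw [hWj] at a3
    rw [h] at b1 b2 b3 ⊢
    intro r hr
    simp only [Finset.mem_insert, Finset.mem_singleton] at a1 a2 a3 b1 b2 b3 hr ⊢
    grind

end nofull

end KTM

namespace KTM
section nofull2
variable {V E K : Type*}

theorem near_sets [DecidableEq V] (a : K) (U : K → Finset V) (hev : ∀ i, Even (U i).card)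
    (hU : ∀ i j, (U i ∪ U j).card ≤ (U i ∩ U j).card + 2) :
    (∃ (C : Finset V) (x : K → V), ∀ i u, u ∈ U i ↔ (u ∈ C ↔ u ≠ x i)) ∨
      ∃ D : Finset V, D.card ≤ 3 ∧ ∀ i j u, u ∉ D → u ∈ U i → u ∈ U j := by
  let Y : K → K → Finset V := fun i j => (U i ∪ U j) \ (U i ∩ U j)
  have hYm : ∀ i j u, u ∈ Y i j ↔ ¬ (u ∈ U i ↔ u ∈ U j) := by
    intro i j u
    simp only [Y, Finset.mem_sdiff, Finset.mem_union, Finset.mem_inter]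
    tauto
  have hYc : ∀ i j, (Y i j).card = 0 ∨ (Y i j).card = 2 := by
    intro i j
    have h1 : (Y i j).card = (U i ∪ U j).card - (U i ∩ U j).card :=
      Finset.card_sdiff_of_subset (fun x hx => by
        rw [Finset.mem_inter] at hx; rw [Finset.mem_union]; exact Or.inl hx.1)
    have h2 := Finset.card_union_add_card_inter (U i) (U j)
    have h3 := hU i j
    obtain ⟨k, hk⟩ := hev i
    obtain ⟨l, hl⟩ := hev j
    omega
  have hst := star_or_triangle (fun i => Y i a) (fun i => by
    rcases hYc i a with h | h
    · exact Or.inl (Finset.card_eq_zero.1 h)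
    · obtain ⟨x, y, hxy, h⟩ := Finset.card_eq_two.1 h
      exact Or.inr ⟨x, y, hxy, h⟩) (by
    intro i j hi hj
    by_contra hcon
    push Not at hcon
    have hsub : Y i a ∪ Y j a ⊆ Y i j := by
      intro u hu
      have := hcon u
      rw [Finset.mem_union] at hu
      rw [hYm] at hu this ⊢
      rw [hYm] at hu this
      tauto
    have h1 := Finset.card_le_card hsub
    rw [Finset.card_union_of_disjoint (Finset.disjoint_left.2 hcon)] at h1
    have h2 := Finset.card_pos.2 hi
    have h3 := Finset.card_pos.2 hj
    have := hYc i j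
    have := hYc i a
    have := hYc j a
    omega)
  rcases hst with ⟨p, hp⟩ | ⟨D, hD, hDi⟩
  · left
    have hC : ∃ C : Finset V, ∀ u, u ∈ C ↔ ¬ (u ∈ U a ↔ u = p) := by
      by_cases h : p ∈ U a
      · refine ⟨(U a).erase p, fun u => ?_⟩
        rw [Finset.mem_erase]
        by_cases hu : u = p
        · subst hu; tauto
        · tauto
      · refine ⟨insert p (U a), fun u => ?_⟩
        rw [Finset.mem_insert]
        by_cases hu : u = p
        · subst hu; tauto
        · tauto
    obtain ⟨C, hC⟩ := hC
    have hx : ∀ i, ∃ x, ∀ u, u ∈ U i ↔ (u ∈ C ↔ u ≠ x) := by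
      intro i
      rcases hp i with h | ⟨x, hxp, h⟩
      · refine ⟨p, fun u => ?_⟩
        have h1 := hYm i a u
        rw [h] at h1
        have := hC u
        simp only [Finset.notMem_empty, false_iff, not_not] at h1
        tauto
      · refine ⟨x, fun u => ?_⟩
        have h1 := hYm i a u
        rw [h, Finset.mem_insert, Finset.mem_singleton] at h1
        have := hC u
        by_cases k : u = p
        · subst k
          have := hxp.symm
          tauto
        · tauto
    choose x hx using hx
    exact ⟨C, x, hx⟩
  · right
    refine ⟨D, hD, ?_⟩
    intro i j u hu hi
    have h1 := (hYm i a u).not.1 (fun h => hu (hDi i h))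
    have h2 := (hYm j a u).not.1 (fun h => hu (hDi j h))
    tauto

theorem nofull_case [Fintype E] [Fintype K] {s t : E → V} {c : E → K} (hK : Kmp s t c)
    {T : K → E} (hT : ∀ k, c (T k) = k) (hnf : ∀ v, ∃ k, ∀ e, c e = k → ¬ Inc s t v e) :
    Minor s t T := by
  classical
  by_cases hKe : IsEmpty K
  · exact Minor.trivial c hT (fun i => (hKe.false i).elim)
  rw [not_isEmpty_iff] at hKe
  obtain ⟨a⟩ := hKe
  let M : K → Finset E := fun i => Finset.univ.filter (fun e => c e = i)
  have hM : ∀ i e, e ∈ M i ↔ c e = i := by intro i e; simp [M]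
  let U : K → Finset V := fun i => vs s t (M i)
  have hUm : ∀ i u, u ∈ U i ↔ ∃ e, c e = i ∧ Inc s t u e := by
    intro i u
    simp only [U, mem_vs, hM]
  have hcard : ∀ i, (U i).card = 2 * (M i).card := by
    intro i
    apply card_vs_matching hK.loop
    intro e he f hf h
    exact hK.proper e f (((hM i e).1 he).trans ((hM i f).1 hf).symm) h
  have inU : ∀ e, s e ∈ U (c e) ∧ t e ∈ U (c e) := fun e =>
    ⟨(hUm _ _).2 ⟨e, rfl, Or.inl rfl⟩, (hUm _ _).2 ⟨e, rfl, Or.inr rfl⟩⟩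
  have hsmall : ∀ D : Finset V, D.card ≤ 3 → (∀ i, U i ⊆ D) → Minor s t T := by
    intro D hD h
    apply Minor.trivial c hT
    intro i j hij
    exact share_of_card_le hK.loop hD ⟨h _ (inU _).1, h _ (inU _).2⟩ ⟨h _ (inU _).1, h _ (inU _).2⟩
  have hns := near_sets a U (fun i => by rw [hcard]; simp) (by
    intro i j
    by_cases hij : i = j
    · subst hij; simp
    · have h1 : (vs s t (M i ∪ M j)).card ≤ (M i ∪ M j).card + 1 := by
        apply card_vs_le ⟨T i, by simp [hM, hT]⟩
        have := hK.kempe i j hij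
        have h2 : ((M i ∪ M j : Finset E) : Set E) = {e | c e = i ∨ c e = j} := by
          ext e; simp [M]
        rw [h2]; exact this
      have h2 : vs s t (M i ∪ M j) = U i ∪ U j := by
        ext u
        rw [Finset.mem_union, hUm, hUm, mem_vs]
        simp only [Finset.mem_union, hM]
        constructor
        · rintro ⟨e, h | h, h'⟩
          · exact Or.inl ⟨e, h, h'⟩
          · exact Or.inr ⟨e, h, h'⟩
        · rintro (⟨e, h, h'⟩ | ⟨e, h, h'⟩)
          · exact ⟨e, Or.inl h, h'⟩
          · exact ⟨e, Or.inr h, h'⟩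
      rw [h2] at h1
      have h3 := Finset.card_union_le (M i) (M j)
      have h4 := Finset.card_union_add_card_inter (U i) (U j)
      have h5 := hcard i
      have h6 := hcard j
      omega)
  have hnf' : ∀ u, ∃ k, u ∉ U k := by
    intro u
    obtain ⟨k, hk⟩ := hnf u
    exact ⟨k, fun h => by obtain ⟨e, h1, h2⟩ := (hUm _ _).1 h; exact hk e h1 h2⟩
  rcases hns with ⟨C, x, hx⟩ | ⟨D, hD, h⟩
  swap
  · refine hsmall D hD (fun i u hu => ?_)
    by_contra hn
    obtain ⟨k, hk⟩ := hnf' u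
    exact hk (h i k u hn hu)
  have hκ : ∀ y, ∃ k, y ∈ C → x k = y := by
    intro y
    obtain ⟨k, hk⟩ := hnf' y
    refine ⟨k, fun hy => ?_⟩
    rw [hx] at hk
    by_contra hne
    exact hk ⟨fun _ h => hne h.symm, fun _ => hy⟩
  choose κ hκ using hκ
  -- no colour covers a vertex outside `C`
  have hxC : ∀ i, x i ∈ C := by
    intro i
    by_contra hq
    have hqU : x i ∈ U i := (hx i _).2 ⟨fun h => absurd h hq, fun h => absurd rfl h⟩
    obtain ⟨e0, he0, hqe⟩ := (hUm _ _).1 hqU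
    obtain ⟨y, hyq, hye⟩ := other_end hK.loop e0 (x i)
    have hyC : y ∈ C := ((hx i y).1 ((hUm _ _).2 ⟨e0, he0, hye⟩)).2 hyq
    have hk := hκ y hyC
    have hik : i ≠ κ y := by
      intro h; rw [← h] at hk; exact hq (hk ▸ hyC)
    have := hK.kempe i (κ y) hik (fun e => e = e0) ⟨e0, Or.inl he0, rfl⟩ (by
      rintro e he f hf rfl ⟨w, hwe, hwf⟩
      rcases hf with hf | hf
      · exact hK.proper f e (hf.trans he0.symm) ⟨w, hwf, hwe⟩
      · exfalso
        have hwU : w ∈ U (κ y) := (hUm _ _).2 ⟨f, hf, hwf⟩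
        rw [hx, hk] at hwU
        rcases Inc.two hqe hye hyq.symm hwe with h | h
        · exact hq (h ▸ hwU.2 (h ▸ hyq.symm))
        · subst h; exact hwU.1 hyC rfl) (T (κ y)) (Or.inr (hT _))
    exact hik (he0.symm.trans ((congrArg c this).symm.trans (hT _)))
  have hU' : ∀ i u, u ∈ U i ↔ u ∈ C ∧ u ≠ x i := by
    intro i u
    rw [hx]
    have := hxC i
    by_cases h : u = x i
    · subst h; tauto
    · tauto
  have hUC : ∀ i, U i ⊆ C := fun i u hu => ((hU' i u).1 hu).1
  by_cases h3 : C.card ≤ 3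
  · exact hsmall C h3 hUC
  have hUcard : ∀ i, (U i).card + 1 = C.card := by
    intro i
    have : U i = C.erase (x i) := by
      ext u; rw [hU', Finset.mem_erase]; tauto
    rw [this, Finset.card_erase_of_mem (hxC i)]
    omega
  have hins : ∀ e, s e ∈ C ∧ t e ∈ C := fun e => ⟨hUC _ (inU e).1, hUC _ (inU e).2⟩
  have hincC : ∀ e u, Inc s t u e → u ∈ C := by
    rintro e u (rfl | rfl)
    · exact (hins e).1
    · exact (hins e).2
  -- the graph is simple
  have hsimple : ∀ e f u w, u ≠ w → Inc s t u e → Inc s t w e → Inc s t u f → Inc s t w f →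
      e = f := by
    intro e f u w huw h1 h2 h3' h4
    by_contra hne
    have hcne : c e ≠ c f := fun h => hne (hK.proper e f h ⟨u, h1, h3'⟩)
    have := hK.kempe (c e) (c f) hcne (fun g => g = e ∨ g = f) ⟨e, Or.inl rfl, Or.inl rfl⟩ (by
      intro g hg g' hg' hP ⟨z, hz, hz'⟩
      have hz2 : z = u ∨ z = w := by
        rcases hP with rfl | rfl
        · exact Inc.two h1 h2 huw hz
        · exact Inc.two h3' h4 huw hz
      have hze : Inc s t z e := by rcases hz2 with rfl | rfl <;> assumption
      have hzf : Inc s t z f := by rcases hz2 with rfl | rfl <;> assumption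
      rcases hg' with h | h
      · exact Or.inl (hK.proper _ _ h ⟨z, hz', hze⟩)
      · exact Or.inr (hK.proper _ _ h ⟨z, hz', hzf⟩))
    have hMc : (M (c e)).card ≤ 1 := by
      rw [Finset.card_le_one]
      have key : ∀ g ∈ M (c e), g = e := by
        intro g hg
        rw [hM] at hg
        rcases this g (Or.inl hg) with h | h
        · exact h
        · exact absurd (by rw [← hg, h]) hcne
      intro g hg g' hg'
      rw [key g hg, key g' hg']
    have := hcard (c e)
    have := hUcard (c e)
    omega
  -- counting
  have hN : ∀ u i, ∃ w, u ∈ C → x i ≠ u → w ∈ C.erase u ∧ ∃ e, c e = i ∧ Inc s t u e ∧ Inc s t w e := by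
    intro u i
    by_cases h : u ∈ C ∧ x i ≠ u
    · obtain ⟨e, he, hue⟩ := (hUm i u).1 ((hU' i u).2 ⟨h.1, h.2.symm⟩)
      obtain ⟨w, hwu, hwe⟩ := other_end hK.loop e u
      exact ⟨w, fun _ _ => ⟨Finset.mem_erase.2 ⟨hwu, hincC e w hwe⟩, e, he, hue, hwe⟩⟩
    · exact ⟨u, fun h1 h2 => absurd ⟨h1, h2⟩ h⟩
  choose o ho using hN
  let N : V → Finset K := fun u => Finset.univ.filter (fun i => x i ≠ u)
  have hoinj : ∀ u ∈ C, Set.InjOn (o u) (N u) := by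
    intro u hu i hi j hj hij
    have hi' : x i ≠ u := by simpa [N] using hi
    have hj' : x j ≠ u := by simpa [N] using hj
    obtain ⟨h1, e, he, hue, hwe⟩ := ho u i hu hi'
    obtain ⟨h2, f, hf, huf, hwf⟩ := ho u j hu hj'
    rw [← hij] at hwf
    have := hsimple e f u (o u i) (Finset.ne_of_mem_erase h1).symm hue hwe huf hwf
    rw [← he, ← hf, this]
  have hoimg : ∀ u ∈ C, (N u).image (o u) ⊆ C.erase u := by
    intro u hu w hw
    obtain ⟨i, hi, rfl⟩ := Finset.mem_image.1 hw
    exact (ho u i hu (by simpa [N] using hi)).1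
  have hNle : ∀ u ∈ C, (N u).card ≤ C.card - 1 := by
    intro u hu
    rw [← Finset.card_image_of_injOn (hoinj u hu), ← Finset.card_erase_of_mem hu]
    exact Finset.card_le_card (hoimg u hu)
  have hsum : ∑ u ∈ C, (N u).card = Fintype.card K * (C.card - 1) := by
    have := Finset.sum_card_bipartiteAbove_eq_sum_card_bipartiteBelow (s := C)
      (t := (Finset.univ : Finset K)) (fun u i => x i ≠ u)
    unfold Finset.bipartiteAbove Finset.bipartiteBelow at this
    rw [show ∑ u ∈ C, (N u).card = _ from this, Finset.sum_const_nat (m := C.card - 1)]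
    · rw [Finset.card_univ]
    · intro i _
      rw [← Finset.card_erase_of_mem (hxC i)]
      congr 1
      ext u
      rw [Finset.mem_filter, Finset.mem_erase]
      tauto
  have hKC : Fintype.card K ≤ C.card := by
    have h1 := Finset.sum_le_card_nsmul C (fun u => (N u).card) (C.card - 1) hNle
    simp only [smul_eq_mul] at h1
    rw [hsum] at h1
    exact Nat.le_of_mul_le_mul_right h1 (by omega)
  have himx : C ⊆ Finset.univ.image x := by
    intro y hy
    exact Finset.mem_image.2 ⟨κ y, Finset.mem_univ _, hκ y hy⟩
  have hCK : C.card = Fintype.card K := by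
    have h1 := Finset.card_le_card himx
    have h2 := Finset.card_image_le (s := (Finset.univ : Finset K)) (f := x)
    rw [Finset.card_univ] at h2
    omega
  have hxinj : Function.Injective x := by
    have h1 := Finset.card_le_card himx
    have h2 := Finset.card_image_le (s := (Finset.univ : Finset K)) (f := x)
    rw [Finset.card_univ] at h2
    have h3 : (Finset.univ.image x).card = (Finset.univ : Finset K).card := by
      rw [Finset.card_univ]; omega
    rw [Finset.card_image_iff] at h3
    exact fun i j h => h3 (by simp) (by simp) h
  have hNeq : ∀ u ∈ C, (N u).image (o u) = C.erase u := by
    intro u hu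
    apply Finset.eq_of_subset_of_card_le (hoimg u hu)
    rw [Finset.card_image_of_injOn (hoinj u hu), Finset.card_erase_of_mem hu]
    have h1 : N u = Finset.univ.erase (κ u) := by
      ext i
      simp only [N, Finset.mem_filter, Finset.mem_univ, true_and, Finset.mem_erase, and_true]
      constructor
      · intro h h'; rw [h'] at h; exact h (hκ u hu)
      · intro h h'; exact h (hxinj (h'.trans (hκ u hu).symm))
    rw [h1, Finset.card_erase_of_mem (Finset.mem_univ _), Finset.card_univ]
    omega
  have hed : ∀ u w, ∃ e, u ∈ C → w ∈ C → u ≠ w → Inc s t u e ∧ Inc s t w e := by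
    intro u w
    by_cases h : u ∈ C ∧ w ∈ C ∧ u ≠ w
    · have : w ∈ (N u).image (o u) := by
        rw [hNeq u h.1, Finset.mem_erase]; exact ⟨h.2.2.symm, h.2.1⟩
      obtain ⟨i, hi, rfl⟩ := Finset.mem_image.1 this
      obtain ⟨_, e, _, h1, h2⟩ := ho u i h.1 (by simpa [N] using hi)
      exact ⟨e, fun _ _ _ => ⟨h1, h2⟩⟩
    · exact ⟨T a, fun h1 h2 h3 => absurd ⟨h1, h2, h3⟩ h⟩
  choose ed hed using hed
  have Tinj : Function.Injective T := fun a b h => by rw [← hT a, ← hT b, h]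
  have hTm : ∀ k, T k ∈ Finset.univ.image T := fun k => Finset.mem_image_of_mem _ (Finset.mem_univ k)
  obtain ⟨B, b1, b2, _, b4, b5⟩ := complete_lemma hK.loop ed hsimple C.card C (Finset.univ.image T) rfl
    (by rw [Finset.card_image_of_injective _ Tinj, Finset.card_univ, hCK])
    (fun u hu w hw h => hed u w hu hw h) (fun e _ => hins e)
  exact ⟨fun k => B (T k), fun k => b1 _ (hTm k), fun k => b2 _ (hTm k),
    fun i j hij => b4 _ (hTm i) _ (hTm j) (fun h => hij (Tinj h)),
    fun i j hij => b5 _ (hTm i) _ (hTm j) (fun h => hij (Tinj h))⟩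

end nofull2

end KTM

namespace KTM
section final
universe u

theorem main_thm {V K : Type*} [Fintype K] (n : ℕ) : ∀ (E : Type u) [Fintype E] (s t : E → V)
    (c : E → K) (T : K → E), Fintype.card E ≤ n → Kmp s t c → (∀ k, c (T k) = k) →
    Minor s t T := by
  classical
  induction n with
  | zero =>
    intro E _ s t c T hE hK hT
    have : IsEmpty E := Fintype.card_eq_zero_iff.1 (by omega)
    exact Minor.trivial c hT (fun i => (this.false (T i)).elim)
  | succ n ih =>
    intro E _ s t c T hE hK hT
    by_cases hv : ∃ v, ∀ k, ∃ e, c e = k ∧ Inc s t v e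
    · obtain ⟨v, hv⟩ := hv
      refine full_case hK hT v hv ?_
      intro X ⟨e, he⟩ hX hK'
      refine ih {e // ¬ Ins s t X e} _ _ _ _ ?_ hK' hT
      have := Fintype.card_subtype_lt (p := fun e => ¬ Ins s t X e) (x := e) (by simpa using he)
      omega
    · push Not at hv
      exact nofull_case hK hT hv

end final

theorem cn_of_connected {E : Type*} {G : SimpleGraph E} {F : Set E} {r : E → E → Prop}
    (hr : ∀ e f, G.Adj e f → r e f) (h : (G.induce F).Connected) : Cn r F := by
  intro P ⟨e, he, hP⟩ hc f hf
  obtain ⟨w⟩ := h.preconnected ⟨e, he⟩ ⟨f, hf⟩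
  have key : ∀ (a b : F), (G.induce F).Walk a b → P a → P b := by
    intro a b w
    induction w with
    | nil => exact id
    | cons hadj _ ih => exact fun ha => ih (hc _ (Subtype.property _) _ (Subtype.property _) ha (hr _ _ hadj))
  exact key _ _ w hP

theorem connected_of_cn {E : Type*} {G : SimpleGraph E} {F : Set E} {r : E → E → Prop}
    (hr : ∀ e f, r e f → e = f ∨ G.Adj e f) (hne : F.Nonempty) (h : Cn r F) :
    (G.induce F).Connected := by
  rw [SimpleGraph.connected_iff]
  refine ⟨?_, hne.to_subtype⟩
  intro a b
  have := h (fun e => ∃ he : e ∈ F, (G.induce F).Reachable a ⟨e, he⟩)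
    ⟨a, a.2, a.2, SimpleGraph.Reachable.refl _⟩ (by
      rintro e he f hf ⟨_, hre⟩ hef
      refine ⟨hf, ?_⟩
      rcases hr e f hef with rfl | hadj
      · exact hre
      · exact hre.trans (SimpleGraph.Adj.reachable (G := G.induce F) (u := ⟨e, he⟩) (v := ⟨f, hf⟩) hadj)) b b.2
  exact this.2

theorem final {V : Type*} [Fintype V]
    (H : SimpleGraph V) (𝔠 : Set (Set H.edgeSet))
    (hK : KempeColoring (lineGraph H) 𝔠)
    (T : Set H.edgeSet) (hT : T ⊆ ⋃₀ 𝔠) (hT1 : ∀ C ∈ 𝔠, ∃! e, e ∈ T ∧ e ∈ C) :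
    ∃ 𝔎 : Set (Set H.edgeSet),
      (∀ A ∈ 𝔎, ((lineGraph H).induce A).Connected) ∧
      (∀ A ∈ 𝔎, ∀ B ∈ 𝔎, A ≠ B → Disjoint A B) ∧
      (∀ A ∈ 𝔎, ∀ B ∈ 𝔎, A ≠ B → ∃ a ∈ A, ∃ b ∈ B, (lineGraph H).Adj a b) ∧
      (∀ A ∈ 𝔎, ∃! e, e ∈ T ∧ e ∈ A) ∧
      (∀ e ∈ T, ∃ A ∈ 𝔎, e ∈ A) := by
  classical
  obtain ⟨k1, k2, k3, k4, k5⟩ := hK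
  have hst : ∀ e : H.edgeSet, ∃ p : V × V, (e : Sym2 V) = s(p.1, p.2) := by
    rintro ⟨e, he⟩
    induction e with
    | _ x y => exact ⟨(x, y), rfl⟩
  choose p hp using hst
  let s : H.edgeSet → V := fun e => (p e).1
  let t : H.edgeSet → V := fun e => (p e).2
  have hmem : ∀ (e : H.edgeSet) (v : V), v ∈ (e : Sym2 V) ↔ Inc s t v e := by
    intro e v
    rw [hp e, Sym2.mem_iff]
    rfl
  have hshr : ∀ e f : H.edgeSet, (∃ v, v ∈ (e : Sym2 V) ∧ v ∈ (f : Sym2 V)) ↔ Shr s t e f := by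
    intro e f
    simp only [hmem]
    rfl
  have hadj : ∀ e f, (lineGraph H).Adj e f ↔ e ≠ f ∧ Shr s t e f := by
    intro e f
    unfold lineGraph
    rw [SimpleGraph.fromRel_adj, hshr, hshr]
    constructor
    · rintro ⟨h, h' | h'⟩
      · exact ⟨h, h'⟩
      · exact ⟨h, h'.symm⟩
    · rintro ⟨h, h'⟩
      exact ⟨h, Or.inl h'⟩
  have hloop : ∀ e, s e ≠ t e := by
    intro e h
    have h1 := e.2
    rw [hp e] at h1
    exact (SimpleGraph.mem_edgeSet H).1 h1 |>.ne h
  have hcov : ∀ e : H.edgeSet, ∃ C : 𝔠, e ∈ (C : Set H.edgeSet) := by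
    intro e
    have : e ∈ ⋃₀ 𝔠 := by rw [k2]; trivial
    obtain ⟨C, hC, he⟩ := this
    exact ⟨⟨C, hC⟩, he⟩
  choose c hc using hcov
  have hcu : ∀ (e : H.edgeSet) (C : 𝔠), e ∈ (C : Set H.edgeSet) → c e = C := by
    intro e C he
    by_contra hne
    exact Set.disjoint_left.1 (k3 _ (c e).2 _ C.2 (fun h => hne (Subtype.ext h))) (hc e) he
  have hci : ∀ (e : H.edgeSet) (C : 𝔠), e ∈ (C : Set H.edgeSet) ↔ c e = C :=
    fun e C => ⟨hcu e C, fun h => h ▸ hc e⟩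
  have hTe : ∀ C : 𝔠, ∃ e, e ∈ T ∧ e ∈ (C : Set H.edgeSet) := fun C => (hT1 C C.2).exists
  choose τ hτT hτC using hTe
  have hτu : ∀ e ∈ T, e = τ (c e) := by
    intro e he
    exact (hT1 _ (c e).2).unique ⟨he, hc e⟩ ⟨hτT _, hτC _⟩
  have hcτ : ∀ k, c (τ k) = k := fun k => hcu _ _ (hτC k)
  have : Fintype H.edgeSet := Fintype.ofFinite _
  have : Fintype 𝔠 := Fintype.ofFinite _
  have hKmp : Kmp s t c := by
    refine ⟨hloop, ?_, ?_⟩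
    · intro e f hef hs
      by_contra hne
      exact k4 _ (c e).2 e (hc e) f (hef ▸ hc f) ((hadj e f).2 ⟨hne, hs⟩)
    · intro i j hij
      have h1 := cn_of_connected (r := Shr s t) (fun e f h => ((hadj e f).1 h).2)
        (k5 i i.2 j j.2 (fun h => hij (Subtype.ext h)))
      have h2 : {e | c e = i ∨ c e = j} = (i : Set H.edgeSet) ∪ j := by
        ext e
        rw [Set.mem_union, hci, hci]
        rfl
      rw [h2]; exact h1
  obtain ⟨B, b1, b2, b3, b4⟩ := main_thm _ H.edgeSet s t c τ le_rfl hKmp hcτ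
  refine ⟨Set.range B, ?_, ?_, ?_, ?_, ?_⟩
  · rintro _ ⟨k, rfl⟩
    refine connected_of_cn (r := Shr s t) ?_ ⟨_, b1 k⟩ (b2 k)
    intro e f h
    by_cases hef : e = f
    · exact Or.inl hef
    · exact Or.inr ((hadj e f).2 ⟨hef, h⟩)
  · rintro _ ⟨i, rfl⟩ _ ⟨j, rfl⟩ h
    exact b3 i j (fun h' => h (by rw [h']))
  · rintro _ ⟨i, rfl⟩ _ ⟨j, rfl⟩ h
    have hij : i ≠ j := fun h' => h (by rw [h'])
    obtain ⟨a, ha, b, hb, hab⟩ := b4 i j hij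
    refine ⟨a, ha, b, hb, (hadj a b).2 ⟨?_, hab⟩⟩
    rintro rfl
    exact Set.disjoint_left.1 (b3 i j hij) ha hb
  · rintro _ ⟨k, rfl⟩
    refine ⟨τ k, ⟨hτT k, b1 k⟩, ?_⟩
    rintro e ⟨heT, heB⟩
    have h1 := hτu e heT
    by_cases h : c e = k
    · rw [h1, h]
    · exact absurd heB (Set.disjoint_left.1 (b3 _ _ h) (by have := b1 (c e); rwa [← h1] at this))
  · intro e he
    refine ⟨B (c e), ⟨c e, rfl⟩, ?_⟩
    have := b1 (c e)
    rwa [← hτu e he] at this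

end KTM

/-- For every transversal `T` of every Kempe coloring of the line graph `L(H)` of a
graph `H`, there exists a complete minor of `L(H)` traversed by `T`: a family of
connected, pairwise disjoint, pairwise adjacent vertex subsets of `L(H)`, each
containing exactly one element of `T`. -/
theorem kempe_transversal_clique_minor_in_lineGraph {V : Type*} [Fintype V]
    (H : SimpleGraph V) (𝔠 : Set (Set H.edgeSet))
    (hK : KempeColoring (lineGraph H) 𝔠)
    (T : Set H.edgeSet) (hT : T ⊆ ⋃₀ 𝔠) (hT1 : ∀ C ∈ 𝔠, ∃! e, e ∈ T ∧ e ∈ C) :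
    ∃ 𝔎 : Set (Set H.edgeSet),
      (∀ A ∈ 𝔎, ((lineGraph H).induce A).Connected) ∧
      (∀ A ∈ 𝔎, ∀ B ∈ 𝔎, A ≠ B → Disjoint A B) ∧
      (∀ A ∈ 𝔎, ∀ B ∈ 𝔎, A ≠ B → ∃ a ∈ A, ∃ b ∈ B, (lineGraph H).Adj a b) ∧
      (∀ A ∈ 𝔎, ∃! e, e ∈ T ∧ e ∈ A) ∧
      (∀ e ∈ T, ∃ A ∈ 𝔎, e ∈ A) := by
  exact KTM.final H 𝔠 hK T hT hT1
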